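/- arXiv:1909.09570 — 12 statements merged into one kernel-verified Lean document; each statement's English description precedes it below -/
import Mathlib

section
/- Let V ⊂ ℤ² be a finite set such that the convex hull P := convexHull ℝ V (viewing ℤ² ⊂ ℝ²) is two-dimensional (V affinely spans ℝ²), every point of V is an extreme point of P, and the lattice points of P are exactly the points of V, i.e. P ∩ ℤ² = V. Then there exist a matrix A ∈ GL(2,ℤ) and a translation vector t ∈ ℤ² such that the image of V under x ↦ A·x + t is either the triangle vertex set {(0,0),(1,0),(0,1)} or the unit square vertex set {(0,0),(1,0),(0,1),(1,1)}. -/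
/-- The embedding of the lattice `ℤ²` into `ℝ²`. -/
def latticeEmbed₂ (v : Fin 2 → ℤ) : Fin 2 → ℝ := fun i => (v i : ℝ)

/-- Twice the signed area of a lattice triangle. -/
def latDet (a b c : Fin 2 → ℤ) : ℤ :=
  (b 0 - a 0) * (c 1 - a 1) - (b 1 - a 1) * (c 0 - a 0)

lemma fin2_ext {x y : Fin 2 → ℤ} (h0 : x 0 = y 0) (h1 : x 1 = y 1) : x = y := by
  funext i; fin_cases i <;> assumption

lemma tri_aux (V : Finset (Fin 2 → ℤ))
    (hext : ∀ v ∈ V, latticeEmbed₂ v ∈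
      Set.extremePoints ℝ (convexHull ℝ (latticeEmbed₂ '' (V : Set (Fin 2 → ℤ)))))
    (hlat : ∀ x : Fin 2 → ℤ,
      latticeEmbed₂ x ∈ convexHull ℝ (latticeEmbed₂ '' (V : Set (Fin 2 → ℤ))) ↔ x ∈ V)
    (a b c x : Fin 2 → ℤ) (ha : a ∈ V) (hb : b ∈ V) (hc : c ∈ V)
    (α β γ : ℤ) (hα : 0 ≤ α) (hβ : 0 ≤ β) (hγ : 0 ≤ γ) (hD : 0 < α + β + γ)
    (h : ∀ i, (α + β + γ) * x i = α * a i + β * b i + γ * c i) :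
    x = a ∨ x = b ∨ x = c := by
  have hinj : ∀ y z : Fin 2 → ℤ, latticeEmbed₂ y = latticeEmbed₂ z → y = z := by
    intro y z hyz
    funext i
    have := congrFun hyz i
    simpa [latticeEmbed₂] using this
  set T : Set (Fin 2 → ℝ) := {latticeEmbed₂ a, latticeEmbed₂ b, latticeEmbed₂ c} with hT
  have hsub : T ⊆ latticeEmbed₂ '' (V : Set (Fin 2 → ℤ)) := by
    rintro y (rfl | rfl | rfl)
    exacts [⟨a, ha, rfl⟩, ⟨b, hb, rfl⟩, ⟨c, hc, rfl⟩]
  have hDR : (0 : ℝ) < (α : ℝ) + β + γ := by exact_mod_cast hD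
  have hαR : (0 : ℝ) ≤ α := by exact_mod_cast hα
  have hβR : (0 : ℝ) ≤ β := by exact_mod_cast hβ
  have hγR : (0 : ℝ) ≤ γ := by exact_mod_cast hγ
  have hx : latticeEmbed₂ x ∈ convexHull ℝ T := by
    have e : latticeEmbed₂ x = ((α : ℝ) / (α + β + γ)) • latticeEmbed₂ a
        + ((β : ℝ) / (α + β + γ)) • latticeEmbed₂ b
        + ((γ : ℝ) / (α + β + γ)) • latticeEmbed₂ c := by
      funext i
      have hi : ((α : ℝ) + β + γ) * x i = α * a i + β * b i + γ * c i := by exact_mod_cast h i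
      simp only [latticeEmbed₂, Pi.add_apply, Pi.smul_apply, smul_eq_mul]
      field_simp
      linarith
    rw [e]
    have hcv := convex_convexHull ℝ T
    have hh := hcv.sum_mem (t := (Finset.univ : Finset (Fin 3)))
      (w := ![(α : ℝ) / (α + β + γ), (β : ℝ) / (α + β + γ), (γ : ℝ) / (α + β + γ)])
      (z := ![latticeEmbed₂ a, latticeEmbed₂ b, latticeEmbed₂ c]) ?_ ?_ ?_
    · simpa [Fin.sum_univ_three] using hh
    · intro i _
      fin_cases i <;> simp <;> positivity
    · simp [Fin.sum_univ_three]
      field_simp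
    · intro i _
      apply subset_convexHull
      fin_cases i <;> simp [hT]
  have hxV : x ∈ V := (hlat x).1 (convexHull_mono hsub hx)
  have hxe : latticeEmbed₂ x ∈ Set.extremePoints ℝ (convexHull ℝ T) :=
    inter_extremePoints_subset_extremePoints_of_subset (convexHull_mono hsub) ⟨hx, hext x hxV⟩
  have := extremePoints_convexHull_subset hxe
  rcases this with h | h | h
  · exact Or.inl (hinj _ _ h)
  · exact Or.inr (Or.inl (hinj _ _ h))
  · exact Or.inr (Or.inr (hinj _ _ h))

lemma span_aux (V : Finset (Fin 2 → ℤ))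
    (hspan : affineSpan ℝ (latticeEmbed₂ '' (V : Set (Fin 2 → ℤ))) = ⊤)
    (a : Fin 2 → ℤ) (ha : a ∈ V) (p q : ℤ)
    (h : ∀ c ∈ V, p * (c 0 - a 0) + q * (c 1 - a 1) = 0) : p = 0 ∧ q = 0 := by
  have hv : vectorSpan ℝ (latticeEmbed₂ '' (V : Set (Fin 2 → ℤ))) = ⊤ := by
    rw [← direction_affineSpan, hspan, AffineSubspace.direction_top]
  rw [vectorSpan_eq_span_vsub_set_right ℝ (p := latticeEmbed₂ a) (Set.mem_image_of_mem _ (Finset.mem_coe.2 ha))] at hv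
  let L : (Fin 2 → ℝ) →ₗ[ℝ] ℝ := (p : ℝ) • LinearMap.proj 0 + (q : ℝ) • LinearMap.proj 1
  have hle : (⊤ : Submodule ℝ (Fin 2 → ℝ)) ≤ LinearMap.ker L := by
    rw [← hv, Submodule.span_le]
    rintro _ ⟨_, ⟨c, hc, rfl⟩, rfl⟩
    have := h c hc
    have h2 : (p : ℝ) * (c 0 - a 0) + q * (c 1 - a 1) = 0 := by exact_mod_cast this
    simpa [L, latticeEmbed₂] using h2
  constructor
  · have := hle (x := ![1, 0]) trivial
    simpa [L] using this
  · have := hle (x := ![0, 1]) trivial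
    simpa [L] using this

lemma exists_tri (V : Finset (Fin 2 → ℤ))
    (hspan : affineSpan ℝ (latticeEmbed₂ '' (V : Set (Fin 2 → ℤ))) = ⊤) :
    ∃ a ∈ V, ∃ b ∈ V, ∃ c ∈ V, latDet a b c ≠ 0 := by
  have hne : V.Nonempty := by
    by_contra hV
    rw [Finset.not_nonempty_iff_eq_empty] at hV
    subst hV
    simp at hspan
  obtain ⟨a, ha⟩ := hne
  by_contra! hcon
  have h0 : ∀ b ∈ V, b 0 - a 0 = 0 := by
    intro b hb
    refine (span_aux V hspan a ha (-(b 1 - a 1)) (b 0 - a 0) ?_).2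
    intro c hc
    have := hcon a ha b hb c hc
    unfold latDet at this
    linarith
  have := (span_aux V hspan a ha 1 0 (fun c hc => by rw [h0 c hc]; ring)).1
  exact one_ne_zero this

lemma det_aux (V : Finset (Fin 2 → ℤ))
    (H : ∀ a ∈ V, ∀ b ∈ V, ∀ c ∈ V, ∀ x : Fin 2 → ℤ, ∀ α β γ : ℤ, 0 ≤ α → 0 ≤ β → 0 ≤ γ →
      0 < α + β + γ → (∀ i, (α + β + γ) * x i = α * a i + β * b i + γ * c i) →
      x = a ∨ x = b ∨ x = c)
    (a b c : Fin 2 → ℤ) (ha : a ∈ V) (hb : b ∈ V) (hc : c ∈ V) (hpos : 0 < latDet a b c) :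
    latDet a b c = 1 := by
  set D := latDet a b c with hD
  -- every lattice vector is an integer combination
  have key : ∀ y : Fin 2 → ℤ,
      D ∣ (c 1 - a 1) * y 0 - (c 0 - a 0) * y 1 ∧ D ∣ (b 0 - a 0) * y 1 - (b 1 - a 1) * y 0 := by
    intro y
    set p := (c 1 - a 1) * y 0 - (c 0 - a 0) * y 1 with hp
    set q := (b 0 - a 0) * y 1 - (b 1 - a 1) * y 0 with hq
    have e0 : D * y 0 = p * (b 0 - a 0) + q * (c 0 - a 0) := by
      rw [hD, hp, hq, latDet]; ring
    have e1 : D * y 1 = p * (b 1 - a 1) + q * (c 1 - a 1) := by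
      rw [hD, hp, hq, latDet]; ring
    have hp1 := Int.emod_nonneg p hpos.ne'
    have hp2 := Int.emod_lt_of_pos p hpos
    have hq1 := Int.emod_nonneg q hpos.ne'
    have hq2 := Int.emod_lt_of_pos q hpos
    have hp3 := Int.emod_add_mul_ediv p D
    have hq3 := Int.emod_add_mul_ediv q D
    rw [Int.dvd_iff_emod_eq_zero, Int.dvd_iff_emod_eq_zero]
    set r := p % D
    set s := q % D
    set m := p / D
    set n := q / D
    let z : Fin 2 → ℤ := fun i => y i - m * (b i - a i) - n * (c i - a i)
    have z0 : D * z 0 = r * (b 0 - a 0) + s * (c 0 - a 0) := by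
      simp only [z]; linear_combination e0 - (b 0 - a 0) * hp3 - (c 0 - a 0) * hq3
    have z1 : D * z 1 = r * (b 1 - a 1) + s * (c 1 - a 1) := by
      simp only [z]; linear_combination e1 - (b 1 - a 1) * hp3 - (c 1 - a 1) * hq3
    -- coordinates of a vector are determined
    have cr : D * r = D * ((c 1 - a 1) * z 0 - (c 0 - a 0) * z 1) := by
      have : D = (b 0 - a 0) * (c 1 - a 1) - (b 1 - a 1) * (c 0 - a 0) := rfl
      linear_combination r * this - (c 1 - a 1) * z0 + (c 0 - a 0) * z1
    have cs : D * s = D * ((b 0 - a 0) * z 1 - (b 1 - a 1) * z 0) := by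
      have : D = (b 0 - a 0) * (c 1 - a 1) - (b 1 - a 1) * (c 0 - a 0) := rfl
      linear_combination s * this - (b 0 - a 0) * z1 + (b 1 - a 1) * z0
    have cr' := mul_left_cancel₀ hpos.ne' cr
    have cs' := mul_left_cancel₀ hpos.ne' cs
    have hDe : D = (b 0 - a 0) * (c 1 - a 1) - (b 1 - a 1) * (c 0 - a 0) := rfl
    by_cases hle : r + s ≤ D
    · have := H a ha b hb c hc (fun i => a i + z i) (D - r - s) r s (by linarith) hp1 hq1
        (by linarith) (by
          intro i
          fin_cases i
          · simp only [Fin.zero_eta]; linear_combination z0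
          · simp only [Fin.mk_one]; linear_combination z1)
      rcases this with h | h | h
      · have h0 := congrFun h 0
        have h1 := congrFun h 1
        have h0' : z 0 = 0 := by linarith
        have h1' : z 1 = 0 := by linarith
        rw [h0', h1'] at cr' cs'
        constructor <;> linarith
      · exfalso
        have h0 := congrFun h 0
        have h1 := congrFun h 1
        have h0' : z 0 = b 0 - a 0 := by linarith
        have h1' : z 1 = b 1 - a 1 := by linarith
        rw [h0', h1'] at cr'
        linarith
      · exfalso
        have h0 := congrFun h 0
        have h1 := congrFun h 1
        have h0' : z 0 = c 0 - a 0 := by linarith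
        have h1' : z 1 = c 1 - a 1 := by linarith
        rw [h0', h1'] at cs'
        linarith
    · exfalso
      push Not at hle
      have := H a ha b hb c hc (fun i => b i + c i - a i - z i) (r + s - D) (D - r) (D - s)
        (by linarith) (by linarith) (by linarith)
        (by linarith) (by
          intro i
          fin_cases i
          · simp only [Fin.zero_eta]; linear_combination -z0
          · simp only [Fin.mk_one]; linear_combination -z1)
      rcases this with h | h | h
      · have h0 := congrFun h 0
        have h1 := congrFun h 1
        have h0' : z 0 = (b 0 - a 0) + (c 0 - a 0) := by linarith
        have h1' : z 1 = (b 1 - a 1) + (c 1 - a 1) := by linarith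
        rw [h0', h1'] at cr'
        linarith
      · have h0 := congrFun h 0
        have h1 := congrFun h 1
        have h0' : z 0 = c 0 - a 0 := by linarith
        have h1' : z 1 = c 1 - a 1 := by linarith
        rw [h0', h1'] at cs'
        linarith
      · have h0 := congrFun h 0
        have h1 := congrFun h 1
        have h0' : z 0 = b 0 - a 0 := by linarith
        have h1' : z 1 = b 1 - a 1 := by linarith
        rw [h0', h1'] at cr'
        linarith
  have k1 := key ![1, 0]
  have k2 := key ![0, 1]
  simp only [Matrix.cons_val_zero, Matrix.cons_val_one, mul_one, mul_zero, sub_zero,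
    zero_sub, dvd_neg] at k1 k2
  obtain ⟨⟨m1, hm1⟩, ⟨m2, hm2⟩⟩ := k1
  obtain ⟨⟨m3, hm3⟩, ⟨m4, hm4⟩⟩ := k2
  have hDe : D = (b 0 - a 0) * (c 1 - a 1) - (b 1 - a 1) * (c 0 - a 0) := rfl
  rw [hm1, hm2, hm3, hm4] at hDe
  have : D * 1 = D * (D * (m4 * m1 - m2 * m3)) := by linear_combination hDe
  have h1 := mul_left_cancel₀ hpos.ne' this
  exact Int.eq_one_of_dvd_one hpos.le ⟨_, h1⟩

lemma map_aux (a b c : Fin 2 → ℤ) (hd : latDet a b c = 1 ∨ latDet a b c = -1) :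
    ∃ (A : Matrix.GeneralLinearGroup (Fin 2) ℤ) (t : Fin 2 → ℤ),
      ∀ x : Fin 2 → ℤ, ∀ p q : ℤ, (∀ i, x i = a i + p * (b i - a i) + q * (c i - a i)) →
        (A : Matrix (Fin 2) (Fin 2) ℤ).mulVec x + t = ![p, q] := by
  set D := latDet a b c with hD
  have hDe : D = (b 0 - a 0) * (c 1 - a 1) - (b 1 - a 1) * (c 0 - a 0) := rfl
  have hDD : D * D = 1 := by rcases hd with h | h <;> rw [h] <;> norm_num
  let M : Matrix (Fin 2) (Fin 2) ℤ :=
    !![D * (c 1 - a 1), -(D * (c 0 - a 0)); -(D * (b 1 - a 1)), D * (b 0 - a 0)]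
  have hM : M.det = D := by
    simp only [M, Matrix.det_fin_two_of]
    linear_combination (-D * D) * hDe + D * hDD
  have hu : IsUnit M.det := by rw [hM]; exact IsUnit.of_mul_eq_one D hDD
  refine ⟨Matrix.GeneralLinearGroup.mk'' M hu, - M.mulVec a, ?_⟩
  intro x p q h
  have hc : ((Matrix.GeneralLinearGroup.mk'' M hu : Matrix.GeneralLinearGroup (Fin 2) ℤ) :
    Matrix (Fin 2) (Fin 2) ℤ) = M := rfl
  rw [hc]
  apply fin2_ext
  · simp [M, dotProduct, Fin.sum_univ_two, h 0, h 1]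
    linear_combination (-D * p) * hDe + p * hDD
  · simp [M, dotProduct, Fin.sum_univ_two, h 0, h 1]
    linear_combination (-D * q) * hDe + q * hDD

lemma square_aux (V : Finset (Fin 2 → ℤ)) (a b c d : Fin 2 → ℤ)
    (hV : ∀ x, x ∈ V ↔ x = a ∨ x = b ∨ x = c ∨ x = d)
    (hd : latDet a b c = 1 ∨ latDet a b c = -1) (hs : ∀ i, d i = b i + c i - a i) :
    ∃ (A : Matrix.GeneralLinearGroup (Fin 2) ℤ) (t : Fin 2 → ℤ),
      ((fun x => (A : Matrix (Fin 2) (Fin 2) ℤ).mulVec x + t) '' (V : Set (Fin 2 → ℤ)) =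
        ({![0,0], ![1,0], ![0,1], ![1,1]} : Set (Fin 2 → ℤ))) := by
  obtain ⟨A, t, h⟩ := map_aux a b c hd
  refine ⟨A, t, ?_⟩
  have hVs : (V : Set (Fin 2 → ℤ)) = {a, b, c, d} := by
    ext x; simpa using hV x
  rw [hVs]
  simp only [Set.image_insert_eq, Set.image_singleton]
  rw [h a 0 0 (fun i => by ring), h b 1 0 (fun i => by ring), h c 0 1 (fun i => by ring),
    h d 1 1 (fun i => by rw [hs]; ring)]

lemma tri_final (V : Finset (Fin 2 → ℤ)) (a b c : Fin 2 → ℤ)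
    (hV : ∀ x, x ∈ V ↔ x = a ∨ x = b ∨ x = c)
    (hd : latDet a b c = 1 ∨ latDet a b c = -1) :
    ∃ (A : Matrix.GeneralLinearGroup (Fin 2) ℤ) (t : Fin 2 → ℤ),
      ((fun x => (A : Matrix (Fin 2) (Fin 2) ℤ).mulVec x + t) '' (V : Set (Fin 2 → ℤ)) =
        ({![0,0], ![1,0], ![0,1]} : Set (Fin 2 → ℤ))) := by
  obtain ⟨A, t, h⟩ := map_aux a b c hd
  refine ⟨A, t, ?_⟩
  have hVs : (V : Set (Fin 2 → ℤ)) = {a, b, c} := by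
    ext x; simpa using hV x
  rw [hVs]
  simp only [Set.image_insert_eq, Set.image_singleton]
  rw [h a 0 0 (fun i => by ring), h b 1 0 (fun i => by ring), h c 0 1 (fun i => by ring)]

/-- Up to the action of `GL(2,ℤ)` and lattice translations, the only convex lattice polygons
whose lattice points are exactly their vertices are the standard triangle and the unit square. -/
theorem lattice_polygon_no_interior_points_classification
    (V : Finset (Fin 2 → ℤ))
    (hspan : affineSpan ℝ (latticeEmbed₂ '' (V : Set (Fin 2 → ℤ))) = ⊤)
    (hext : ∀ v ∈ V, latticeEmbed₂ v ∈
      Set.extremePoints ℝ (convexHull ℝ (latticeEmbed₂ '' (V : Set (Fin 2 → ℤ)))))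
    (hlat : ∀ x : Fin 2 → ℤ,
      latticeEmbed₂ x ∈ convexHull ℝ (latticeEmbed₂ '' (V : Set (Fin 2 → ℤ))) ↔ x ∈ V) :
    ∃ (A : Matrix.GeneralLinearGroup (Fin 2) ℤ) (t : Fin 2 → ℤ),
      ((fun x => (A : Matrix (Fin 2) (Fin 2) ℤ).mulVec x + t) '' (V : Set (Fin 2 → ℤ)) =
        ({![0,0], ![1,0], ![0,1]} : Set (Fin 2 → ℤ))) ∨
      ((fun x => (A : Matrix (Fin 2) (Fin 2) ℤ).mulVec x + t) '' (V : Set (Fin 2 → ℤ)) =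
        ({![0,0], ![1,0], ![0,1], ![1,1]} : Set (Fin 2 → ℤ))) := by
  have H : ∀ a ∈ V, ∀ b ∈ V, ∀ c ∈ V, ∀ x : Fin 2 → ℤ, ∀ α β γ : ℤ, 0 ≤ α → 0 ≤ β → 0 ≤ γ →
      0 < α + β + γ → (∀ i, (α + β + γ) * x i = α * a i + β * b i + γ * c i) →
      x = a ∨ x = b ∨ x = c := fun a ha b hb c hc x α β γ h1 h2 h3 h4 h5 =>
    tri_aux V hext hlat a b c x ha hb hc α β γ h1 h2 h3 h4 h5
  have hdet : ∀ a ∈ V, ∀ b ∈ V, ∀ c ∈ V, 0 < latDet a b c → latDet a b c = 1 :=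
    fun a ha b hb c hc h => det_aux V H a b c ha hb hc h
  have hpar : ∀ x ∈ V, ∀ y ∈ V, (∀ i, ∃ k, x i = y i + 2 * k) → x = y := by
    intro x hx y hy hk
    choose k hk using hk
    have := H x hx y hy y hy (fun i => y i + k i) 1 1 0 (by norm_num) (by norm_num) (by norm_num)
      (by norm_num) (fun i => by rw [hk i]; ring)
    have hz : ∀ i, k i = 0 := by
      intro i
      rcases this with h | h | h
      all_goals
        have := congrFun h i
        have := hk i
        try simp only at *
        omega
    funext i
    rw [hk i, hz i]; ring
  -- a positively oriented triangle
  obtain ⟨a, ha, b, hb, c, hc, hpos⟩ : ∃ a ∈ V, ∃ b ∈ V, ∃ c ∈ V, 0 < latDet a b c := by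
    obtain ⟨a, ha, b, hb, c, hc, hne⟩ := exists_tri V hspan
    rcases lt_or_gt_of_ne hne with h | h
    · refine ⟨a, ha, c, hc, b, hb, ?_⟩
      unfold latDet at *
      linarith
    · exact ⟨a, ha, b, hb, c, hc, h⟩
  have hD := hdet a ha b hb c hc hpos
  have hDe : (b 0 - a 0) * (c 1 - a 1) - (b 1 - a 1) * (c 0 - a 0) = 1 := hD
  by_cases hall : ∀ x ∈ V, x = a ∨ x = b ∨ x = c
  · obtain ⟨A, t, h⟩ := tri_final V a b c (fun x => ⟨hall x, by
      rintro (rfl | rfl | rfl) <;> assumption⟩) (Or.inl hD)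
    exact ⟨A, t, Or.inl h⟩
  push Not at hall
  obtain ⟨w, hw, hwa, hwb, hwc⟩ := hall
  -- coordinates in the basis `b - a`, `c - a`
  have coord : ∀ x : Fin 2 → ℤ, ∃ p q : ℤ,
      (∀ i, x i = a i + p * (b i - a i) + q * (c i - a i)) := by
    intro x
    refine ⟨(c 1 - a 1) * (x 0 - a 0) - (c 0 - a 0) * (x 1 - a 1),
      (b 0 - a 0) * (x 1 - a 1) - (b 1 - a 1) * (x 0 - a 0), ?_⟩
    intro i
    fin_cases i
    · simp only [Fin.zero_eta]; linear_combination (-(x 0 - a 0)) * hDe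
    · simp only [Fin.mk_one]; linear_combination (-(x 1 - a 1)) * hDe
  have odd : ∀ x ∈ V, x ≠ a → x ≠ b → x ≠ c → ∃ p q : ℤ,
      (∀ i, x i = a i + (2 * p + 1) * (b i - a i) + (2 * q + 1) * (c i - a i)) := by
    intro x hx hxa hxb hxc
    obtain ⟨p, q, h⟩ := coord x
    rcases Int.even_or_odd' p with ⟨p', rfl | rfl⟩ <;>
    rcases Int.even_or_odd' q with ⟨q', rfl | rfl⟩
    · exact absurd (hpar x hx a ha (fun i => ⟨p' * (b i - a i) + q' * (c i - a i), by
        rw [h i]; ring⟩)) hxa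
    · exact absurd (hpar x hx c hc (fun i => ⟨p' * (b i - a i) + q' * (c i - a i), by
        rw [h i]; ring⟩)) hxc
    · exact absurd (hpar x hx b hb (fun i => ⟨p' * (b i - a i) + q' * (c i - a i), by
        rw [h i]; ring⟩)) hxb
    · exact ⟨p', q', h⟩
  obtain ⟨p, q, h⟩ := odd w hw hwa hwb hwc
  have hV : ∀ x, x ∈ V ↔ x = a ∨ x = b ∨ x = c ∨ x = w := by
    intro x
    constructor
    · intro hx
      by_contra! hcon
      obtain ⟨h1, h2, h3, h4⟩ := hcon
      obtain ⟨p', q', h'⟩ := odd x hx h1 h2 h3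
      exact h4 (hpar x hx w hw (fun i => ⟨(p' - p) * (b i - a i) + (q' - q) * (c i - a i), by
        rw [h i, h' i]; ring⟩))
    · rintro (rfl | rfl | rfl | rfl) <;> assumption
  -- areas of the other triangles
  have hq1 : latDet a b w = 2 * q + 1 := by
    unfold latDet; rw [h 0, h 1]; linear_combination (2 * q + 1) * hDe
  have hq2 : latDet b a w = -(2 * q + 1) := by
    unfold latDet; rw [h 0, h 1]; linear_combination (-(2 * q + 1)) * hDe
  have hp1 : latDet a w c = 2 * p + 1 := by
    unfold latDet; rw [h 0, h 1]; linear_combination (2 * p + 1) * hDe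
  have hp2 : latDet w a c = -(2 * p + 1) := by
    unfold latDet; rw [h 0, h 1]; linear_combination (-(2 * p + 1)) * hDe
  have hr : latDet b w c = 2 * p + 2 * q + 1 ∧ latDet w b c = -(2 * p + 2 * q + 1) := by
    constructor
    · unfold latDet; rw [h 0, h 1]; linear_combination (2 * p + 2 * q + 1) * hDe
    · unfold latDet; rw [h 0, h 1]; linear_combination (-(2 * p + 2 * q + 1)) * hDe
  have d1 := hdet a ha b hb w hw
  have d2 := hdet b hb a ha w hw
  have d3 := hdet a ha w hw c hc
  have d4 := hdet w hw a ha c hc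
  have d5 := hdet w hw b hb c hc
  rw [hq1] at d1
  rw [hq2] at d2
  rw [hp1] at d3
  rw [hp2] at d4
  rw [hr.2] at d5
  have hcases : (p = 0 ∧ q = 0) ∨ (p = -1 ∧ q = 0) ∨ (p = 0 ∧ q = -1) := by omega
  rcases hcases with ⟨rfl, rfl⟩ | ⟨rfl, rfl⟩ | ⟨rfl, rfl⟩
  · obtain ⟨A, t, hA⟩ := square_aux V a b c w hV (Or.inl hD) (fun i => by rw [h i]; ring)
    exact ⟨A, t, Or.inr hA⟩
  · obtain ⟨A, t, hA⟩ := square_aux V a b w c (fun x => by rw [hV x]; tauto)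
      (Or.inl (by rw [hq1]; norm_num)) (fun i => by rw [h i]; ring)
    exact ⟨A, t, Or.inr hA⟩
  · obtain ⟨A, t, hA⟩ := square_aux V a w c b (fun x => by rw [hV x]; tauto)
      (Or.inl (by rw [hp1]; norm_num)) (fun i => by rw [h i]; ring)
    exact ⟨A, t, Or.inr hA⟩
end

section
/- Let V ⊂ ℤ² be a finite set such that every point of V is an extreme point of the convex hull P := convexHull ℝ V (viewing ℤ² ⊂ ℝ²), and the lattice points of P are exactly the points of V, i.e. P ∩ ℤ² = V. Then the cardinality of V is at most 4. In particular, there is no convex lattice pentagon whose only lattice points are its five vertices. -/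
/-- A convex lattice polygon whose lattice points are exactly its vertices has at most
four vertices.  In particular there is no convex lattice pentagon whose only lattice
points are its five vertices. -/
theorem lattice_polygon_no_interior_points_card_le_four
    (V : Finset (Fin 2 → ℤ))
    (hext : ∀ v ∈ V, latticeEmbed₂ v ∈
      Set.extremePoints ℝ (convexHull ℝ (latticeEmbed₂ '' (V : Set (Fin 2 → ℤ)))))
    (hlat : ∀ x : Fin 2 → ℤ,
      latticeEmbed₂ x ∈ convexHull ℝ (latticeEmbed₂ '' (V : Set (Fin 2 → ℤ))) ↔ x ∈ V) :
    V.card ≤ 4 := by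
  by_contra hcard
  push Not at hcard
  have hpig : ∃ a ∈ V, ∃ b ∈ V, a ≠ b ∧
      (fun i => (a i : ZMod 2)) = (fun i : Fin 2 => (b i : ZMod 2)) := by
    apply Finset.exists_ne_map_eq_of_card_lt_of_maps_to
      (t := (Finset.univ : Finset (Fin 2 → ZMod 2)))
    · simpa using hcard
    · intro x _
      simp
  obtain ⟨a, ha, b, hb, hab, hpar⟩ := hpig
  have hm : ∀ i, ∃ c : ℤ, b i - a i = 2 * c := by
    intro i
    have h := congrFun hpar i
    exact (ZMod.intCast_eq_intCast_iff_dvd_sub (a i) (b i) 2).1 h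
  choose c hc using hm
  have hA := (hlat a).2 ha
  have hB := (hlat b).2 hb
  -- the midpoint of `a` and `b` is a lattice point of the hull
  have hseg : latticeEmbed₂ (a + c) ∈ openSegment ℝ (latticeEmbed₂ a) (latticeEmbed₂ b) := by
    refine ⟨1 / 2, 1 / 2, by norm_num, by norm_num, by norm_num, ?_⟩
    funext i
    have h : (b i : ℝ) - a i = 2 * c i := by exact_mod_cast hc i
    simp only [latticeEmbed₂, Pi.add_apply, Pi.smul_apply, smul_eq_mul]
    push_cast
    linarith
  have hM := (convex_convexHull ℝ _).openSegment_subset hA hB hseg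
  have hV := (hlat _).1 hM
  have hE := (mem_extremePoints.1 (hext _ hV)).2 _ hA _ hB hseg
  apply hab
  funext i
  have h := congrFun (hE.1.trans hE.2.symm) i
  simpa [latticeEmbed₂] using h
end

section
/- (Pick's theorem) Let V ⊂ ℤ² be a finite set whose convex hull P := convexHull ℝ V (viewing ℤ² ⊂ ℝ²) is two-dimensional. Let i be the number of lattice points in the interior of P and b the number of lattice points on the topological frontier of P. Then the Lebesgue measure (area) of P equals i + b/2 − 1. -/
open MeasureTheory

/-- Symmetrised floor: counts lattice points below `y`, with half weight at `y`. -/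
noncomputable def psi (y : ℝ) : ℝ := ((⌊y⌋ : ℝ) + (⌈y⌉ : ℝ)) / 2

lemma psi_reflect (n : ℤ) (y : ℝ) : psi ((n : ℝ) - y) = n - psi y := by
  unfold psi
  have h1 : ⌊(n : ℝ) - y⌋ = n - ⌈y⌉ := by
    rw [sub_eq_add_neg, Int.floor_intCast_add, Int.floor_neg]; ring
  have h2 : ⌈(n : ℝ) - y⌉ = n - ⌊y⌋ := by
    rw [sub_eq_add_neg, Int.ceil_intCast_add, Int.ceil_neg]; ring
  rw [h1, h2]; push_cast; ring

lemma psi_int (n : ℤ) : psi (n : ℝ) = n := by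
  unfold psi; simp

/-- Trapezoidal sum of `psi ∘ h`. -/
noncomputable def trap (h : ℝ → ℝ) (a c : ℤ) : ℝ :=
  ∑ x ∈ Finset.Ico a c, (psi (h x) + psi (h (x + 1))) / 2

lemma trap_add (h : ℝ → ℝ) (a b c : ℤ) (hab : a ≤ b) (hbc : b ≤ c) :
    trap h a c = trap h a b + trap h b c := by
  unfold trap
  rw [← Finset.sum_union (Finset.Ico_disjoint_Ico_consecutive a b c),
    Finset.Ico_union_Ico_eq_Ico hab hbc]

lemma trap_congr (h k : ℝ → ℝ) (a c : ℤ)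
    (hk : ∀ x : ℝ, (a : ℝ) ≤ x → x ≤ c → h x = k x) : trap h a c = trap k a c := by
  unfold trap
  refine Finset.sum_congr rfl fun x hx => ?_
  rw [Finset.mem_Ico] at hx
  have h1 : (a : ℝ) ≤ x := by exact_mod_cast hx.1
  have h2 : (x : ℝ) + 1 ≤ c := by exact_mod_cast hx.2
  rw [hk x h1 (by linarith), hk (x + 1) (by linarith) h2]

lemma trap_line (a c y0 y1 : ℤ) (hac : a ≤ c) (m : ℝ)
    (hm : (y0 : ℝ) + m * (c - a) = y1) :
    trap (fun x => y0 + m * (x - a)) a c = ∫ x in (a : ℝ)..c, (y0 + m * (x - a)) := by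
  have hI : ∫ x in (a : ℝ)..c, ((y0 : ℝ) + m * (x - a)) = (c - a) * (y0 + y1) / 2 := by
    have : ∀ x : ℝ, HasDerivAt (fun x : ℝ => y0 * x + m * (x - a) ^ 2 / 2)
        ((y0 : ℝ) + m * (x - a)) x := by
      intro x
      have h1 := ((hasDerivAt_id x).const_mul (y0 : ℝ))
      have h2 := ((((hasDerivAt_id x).sub_const (a : ℝ)).pow 2).const_mul m).div_const 2
      refine (h1.add h2).congr_deriv ?_
      simp only [id]
      norm_num
      ring
    rw [intervalIntegral.integral_eq_sub_of_hasDerivAt (fun x _ => this x)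
      (Continuous.intervalIntegrable (by fun_prop) _ _)]
    rw [← hm]; ring
  rw [hI]
  have hS : trap (fun x => (y0 : ℝ) + m * (x - a)) a c
      = ∑ x ∈ Finset.Ico a c, (((y0 : ℝ) + y1) -
        (psi (y0 + m * ((x : ℝ) - a)) + psi (y0 + m * (((x : ℝ) + 1) - a))) / 2) := by
    unfold trap
    refine Finset.sum_nbij' (fun x => a + c - 1 - x) (fun x => a + c - 1 - x) ?_ ?_ ?_ ?_ ?_
    · intro x hx; rw [Finset.mem_Ico] at *; omega
    · intro x hx; rw [Finset.mem_Ico] at *; omega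
    · intro x hx; ring
    · intro x hx; ring
    · intro x hx
      have e1 : (y0 : ℝ) + m * (((a + c - 1 - x : ℤ) : ℝ) - a)
          = ((y0 + y1 : ℤ) : ℝ) - (y0 + m * (((x : ℝ) + 1) - a)) := by
        push_cast; rw [← hm]; ring
      have e2 : (y0 : ℝ) + m * (((a + c - 1 - x : ℤ) : ℝ) + 1 - a)
          = ((y0 + y1 : ℤ) : ℝ) - (y0 + m * ((x : ℝ) - a)) := by
        push_cast; rw [← hm]; ring
      rw [e1, e2, psi_reflect, psi_reflect]
      push_cast; ring
  rw [Finset.sum_sub_distrib] at hS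
  have hc : ((Finset.Ico a c).card : ℝ) = c - a := by
    rw [Int.card_Ico]
    have : (((c - a).toNat : ℤ) : ℝ) = ((c - a : ℤ) : ℝ) := by
      rw [Int.toNat_of_nonneg (by omega)]
    rw [Int.cast_natCast] at this
    rw [this]; push_cast; rfl
  simp only [Finset.sum_const, nsmul_eq_mul, hc] at hS
  unfold trap at *
  linarith

/-- `h` is the upper boundary of the convex hull of `V` over `[a, c]`. -/
structure Upper (V : Finset (ℤ × ℤ)) (a c : ℤ) (h : ℝ → ℝ) : Prop where
  supp : ∀ x : ℝ, (a : ℝ) ≤ x → x ≤ c →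
    ∃ m k : ℝ, (∀ v ∈ V, (v.2 : ℝ) ≤ m * v.1 + k) ∧ h x = m * x + k
  mem : ∀ x : ℝ, (a : ℝ) ≤ x → x ≤ c →
    ∃ v ∈ V, ∃ w ∈ V, ∃ s t : ℝ, 0 ≤ s ∧ 0 ≤ t ∧ s + t = 1 ∧
      x = s * v.1 + t * w.1 ∧ h x = s * v.2 + t * w.2
  cont : Continuous h
  area : trap h a c = ∫ x in (a : ℝ)..c, h x
  left : ∃ n : ℤ, h a = n
  right : ∃ n : ℤ, h c = n

lemma exists_upper (n : ℕ) : ∀ (V : Finset (ℤ × ℤ)) (a c : ℤ), a ≤ c → c - a ≤ n →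
    (∀ v ∈ V, a ≤ v.1 ∧ v.1 ≤ c) → (∃ v ∈ V, v.1 = a) → (∃ v ∈ V, v.1 = c) →
    ∃ h, Upper V a c h := by
  induction n with
  | zero =>
    intro V a c hac hn hV ha hc
    obtain rfl : a = c := by push_cast at hn; omega
    obtain ⟨v0, hv0, _⟩ := ha
    obtain ⟨p, hp, hpm⟩ := V.exists_max_image (fun v => v.2) ⟨v0, hv0⟩
    have hpa : p.1 = a := by have := hV p hp; omega
    refine ⟨fun _ => p.2, ?_, ?_, continuous_const, ?_, ⟨p.2, rfl⟩, ⟨p.2, rfl⟩⟩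
    · intro x _ _
      refine ⟨0, p.2, fun v hv => ?_, by simp⟩
      have := hpm v hv
      simp only [zero_mul, zero_add]; exact_mod_cast this
    · intro x h1 h2
      refine ⟨p, hp, p, hp, 1, 0, by norm_num, le_refl _, by norm_num, ?_, by simp⟩
      rw [hpa]; simp; linarith
    · simp [trap]
  | succ n ih =>
    intro V a c hac hn hV ha hc
    rcases hac.eq_or_lt with hac' | hac'
    · exact ih V a c hac (by omega) hV ha hc
    obtain ⟨v0, hv0, hv0a⟩ := ha
    obtain ⟨w0, hw0, hw0c⟩ := hc
    obtain ⟨p, hp, hpm⟩ := (V.filter (fun v => v.1 = a)).exists_max_image (fun v => v.2)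
      ⟨v0, by simp [hv0, hv0a]⟩
    rw [Finset.mem_filter] at hp
    obtain ⟨hpV, hpa⟩ := hp
    obtain ⟨q, hq, hqm⟩ := (V.filter (fun v => a < v.1)).exists_max_image
      (fun v => ((v.2 : ℝ) - p.2) / ((v.1 : ℝ) - a))
      ⟨w0, by rw [Finset.mem_filter]; exact ⟨hw0, by omega⟩⟩
    rw [Finset.mem_filter] at hq
    obtain ⟨hqV, hqa⟩ := hq
    have hqc := (hV q hqV).2
    set m : ℝ := ((q.2 : ℝ) - p.2) / ((q.1 : ℝ) - a) with hm
    have hqaR : (0 : ℝ) < (q.1 : ℝ) - a := by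
      have : (a : ℝ) < q.1 := by exact_mod_cast hqa
      linarith
    have hqL : (p.2 : ℝ) + m * (q.1 - a) = q.2 := by
      rw [hm]; field_simp; ring
    have hVL : ∀ v ∈ V, (v.2 : ℝ) ≤ p.2 + m * (v.1 - a) := by
      intro v hv
      rcases (hV v hv).1.eq_or_lt with h | h
      · have h2 := hpm v (by simp [hv, h])
        have h3 : (v.2 : ℝ) ≤ p.2 := by exact_mod_cast h2
        rw [← h]; simpa using h3
      · have h2 := hqm v (by simp [hv, h])
        have h3 : (0 : ℝ) < (v.1 : ℝ) - a := by
          have : (a : ℝ) < v.1 := by exact_mod_cast h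
          linarith
        rw [div_le_iff₀ h3] at h2
        linarith
    obtain ⟨h', H⟩ := ih (V.filter (fun v => q.1 ≤ v.1)) q.1 c hqc (by push_cast at hn; omega)
      (by intro v hv; rw [Finset.mem_filter] at hv; exact ⟨hv.2, (hV v hv.1).2⟩)
      ⟨q, by simp [hqV], rfl⟩ ⟨w0, by simp [hw0, hw0c, hqc], hw0c⟩
    have hqcR : (q.1 : ℝ) ≤ c := by exact_mod_cast hqc
    have hle : ∀ x : ℝ, (q.1 : ℝ) ≤ x → x ≤ c → h' x ≤ p.2 + m * (x - a) := by
      intro x h1 h2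
      obtain ⟨v, hv, w, hw, s, t, hs, ht, hst, hx, hh⟩ := H.mem x h1 h2
      have e1 := hVL v (Finset.mem_filter.1 hv).1
      have e2 := hVL w (Finset.mem_filter.1 hw).1
      have e3 := mul_le_mul_of_nonneg_left e1 hs
      have e4 := mul_le_mul_of_nonneg_left e2 ht
      have e5 : s = 1 - t := by linarith
      rw [hh, hx]
      subst e5
      linarith
    have hq' : h' q.1 = q.2 := by
      apply le_antisymm
      · have := hle q.1 le_rfl hqcR
        linarith
      · obtain ⟨m1, k1, h1, h2⟩ := H.supp q.1 le_rfl hqcR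
        rw [h2]; exact h1 q (by simp [hqV])
    have hL : Continuous (fun x : ℝ => (p.2 : ℝ) + m * (x - a)) := by fun_prop
    set h : ℝ → ℝ := fun x => if x ≤ q.1 then (p.2 : ℝ) + m * (x - a) else h' x with hh
    have hl : ∀ x : ℝ, x ≤ q.1 → h x = p.2 + m * (x - a) := fun x hx => by simp [hh, hx]
    have hr : ∀ x : ℝ, (q.1 : ℝ) ≤ x → h x = h' x := by
      intro x hx
      rcases hx.eq_or_lt with h1 | h1
      · rw [hl x h1.ge, ← h1, hqL, hq']
      · simp [hh, not_le.2 h1]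
    have hcont : Continuous h := by
      apply Continuous.if_le hL H.cont continuous_id continuous_const
      intro x hx
      simp only [id] at hx
      rw [hx, hqL, hq']
    refine ⟨h, ?_, ?_, hcont, ?_, ?_, ?_⟩
    · intro x h1 h2
      rcases le_or_gt x q.1 with h3 | h3
      · refine ⟨m, p.2 - m * a, fun v hv => ?_, ?_⟩
        · have := hVL v hv; linarith
        · rw [hl x h3]; ring
      · obtain ⟨m1, k1, e1, e2⟩ := H.supp x h3.le h2
        refine ⟨m1, k1, fun v hv => ?_, by rw [hr x h3.le, e2]⟩
        rcases le_or_gt q.1 v.1 with h4 | h4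
        · exact e1 v (by simp [hv, h4])
        · have f1 := e1 q (by simp [hqV])
          have f2 := hle x h3.le h2
          have f3 := hVL v hv
          have h4' : (v.1 : ℝ) < q.1 := by exact_mod_cast h4
          have f4 : m1 ≤ m := by
            by_contra hcon
            push Not at hcon
            nlinarith
          nlinarith
    · intro x h1 h2
      rcases le_or_gt x q.1 with h3 | h3
      · refine ⟨p, hpV, q, hqV, ((q.1 : ℝ) - x) / (q.1 - a), (x - a) / (q.1 - a),
          div_nonneg (by linarith) hqaR.le, div_nonneg (by linarith) hqaR.le, ?_, ?_, ?_⟩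
        · field_simp; ring
        · rw [hpa]; field_simp; ring
        · rw [hl x h3, hm]; field_simp; ring
      · obtain ⟨v, hv, w, hw, s, t, hs, ht, hst, hx, hh⟩ := H.mem x h3.le h2
        exact ⟨v, (Finset.mem_filter.1 hv).1, w, (Finset.mem_filter.1 hw).1, s, t, hs, ht, hst,
          hx, by rw [hr x h3.le, hh]⟩
    · rw [trap_add h a q.1 c hqa.le hqc,
        ← intervalIntegral.integral_add_adjacent_intervals (hcont.intervalIntegrable _ (q.1 : ℝ))
          (hcont.intervalIntegrable _ _)]
      congr 1
      · rw [trap_congr h _ a q.1 (fun x _ h2 => hl x h2), trap_line a q.1 p.2 q.2 hqa.le m hqL]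
        apply intervalIntegral.integral_congr
        intro x hx
        rw [Set.uIcc_of_le (by linarith)] at hx
        exact (hl x hx.2).symm
      · rw [trap_congr h h' q.1 c (fun x h1 _ => hr x h1), H.area]
        apply intervalIntegral.integral_congr
        intro x hx
        rw [Set.uIcc_of_le hqcR] at hx
        exact (hr x hx.1).symm
    · exact ⟨p.2, by rw [hl a (by linarith)]; simp⟩
    · rw [hr c hqcR]; exact H.right

lemma trap_eq (h : ℝ → ℝ) (a c : ℤ) (hac : a < c) :
    trap h a c = psi (h a) / 2 + psi (h c) / 2 + ∑ x ∈ Finset.Ioo a c, psi (h x) := by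
  have h1 : trap h a c = (∑ x ∈ Finset.Ico a c, psi (h x)) / 2
      + (∑ x ∈ Finset.Ioc a c, psi (h x)) / 2 := by
    unfold trap
    have : ∑ x ∈ Finset.Ioc a c, psi (h x) = ∑ x ∈ Finset.Ico a c, psi (h (x + 1)) := by
      symm
      refine Finset.sum_nbij' (fun x => x + 1) (fun x => x - 1) ?_ ?_ ?_ ?_ ?_
      · intro x hx; rw [Finset.mem_Ico] at hx; rw [Finset.mem_Ioc]; omega
      · intro x hx; rw [Finset.mem_Ioc] at hx; rw [Finset.mem_Ico]; omega
      · intro x hx; ring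
      · intro x hx; ring
      · intro x hx; push_cast; rfl
    rw [this, ← Finset.sum_div, Finset.sum_add_distrib, add_div]
  rw [h1, ← Finset.Ioo_insert_left hac, ← Finset.Ioo_insert_right hac,
    Finset.sum_insert (by simp), Finset.sum_insert (by simp)]
  ring

/-- Counting lattice points column by column. -/
lemma ncard_columns (S : Finset ℤ) (F : ℤ → Finset ℤ) (A : Set (Fin 2 → ℤ))
    (hA : ∀ z, z ∈ A ↔ z 0 ∈ S ∧ z 1 ∈ F (z 0)) :
    A.ncard = ∑ x ∈ S, (F x).card := by
  classical
  have : A = (fun s : (Σ _ : ℤ, ℤ) => (![s.1, s.2] : Fin 2 → ℤ)) ''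
      ((S.sigma F : Finset (Σ _ : ℤ, ℤ)) : Set (Σ _ : ℤ, ℤ)) := by
    ext z
    rw [hA]
    constructor
    · intro h
      refine ⟨⟨z 0, z 1⟩, by simpa using h, ?_⟩
      ext i; fin_cases i <;> rfl
    · rintro ⟨s, hs, rfl⟩
      simpa using hs
  rw [this, Set.ncard_image_of_injective, Set.ncard_coe_finset, Finset.card_sigma]
  rintro ⟨s1, s2⟩ ⟨t1, t2⟩ h
  have h0 := congrFun h 0
  have h1 := congrFun h 1
  simp at h0 h1
  simp [h0, h1]

/-- Pick's theorem: the area of a two-dimensional lattice polygon equals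
`i + b/2 - 1`, where `i` is the number of interior lattice points and `b` is the
number of lattice points on the frontier. -/
theorem pick_theorem (V : Finset (Fin 2 → ℤ))
    (hspan : affineSpan ℝ (latticeEmbed₂ '' (V : Set (Fin 2 → ℤ))) = ⊤)
    (P : Set (Fin 2 → ℝ)) (hP : P = convexHull ℝ (latticeEmbed₂ '' (V : Set (Fin 2 → ℤ))))
    (i b : ℕ)
    (hi : i = Set.ncard {x : Fin 2 → ℤ | latticeEmbed₂ x ∈ interior P})
    (hb : b = Set.ncard {x : Fin 2 → ℤ | latticeEmbed₂ x ∈ frontier P}) :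
    (volume P).toReal = (i : ℝ) + (b : ℝ) / 2 - 1 := by
  classical
  have hconv : Convex ℝ P := hP ▸ convex_convexHull ℝ _
  have hclosed : IsClosed P := by
    rw [hP]
    exact ((V.finite_toSet.image _).isCompact_convexHull ℝ).isClosed
  have hPint : (interior P).Nonempty := by
    rw [hP]; exact interior_convexHull_nonempty_iff_affineSpan_eq_top.2 hspan
  have hVP : ∀ v ∈ V, latticeEmbed₂ v ∈ P := fun v hv => by
    rw [hP]; exact subset_convexHull ℝ _ ⟨v, hv, rfl⟩
  have hVne : V.Nonempty := by
    obtain ⟨z, hz⟩ := hPint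
    have h1 := interior_subset hz
    rw [hP] at h1
    by_contra hcon
    rw [Finset.not_nonempty_iff_eq_empty] at hcon
    simp [hcon] at h1
  -- half-planes
  have half : ∀ α β k : ℝ, (∀ v ∈ V, α * (v 0 : ℝ) + β * (v 1 : ℝ) ≤ k) →
      ∀ z ∈ P, α * z 0 + β * z 1 ≤ k := by
    intro α β k h z hz
    have hsub : P ⊆ {z : Fin 2 → ℝ | α * z 0 + β * z 1 ≤ k} := by
      rw [hP]
      apply convexHull_min
      · rintro _ ⟨v, hv, rfl⟩
        exact h v hv
      · intro z hz w hw s t hs ht hst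
        simp only [Set.mem_ofPred_eq, Pi.add_apply, Pi.smul_apply, smul_eq_mul] at *
        have e1 := mul_le_mul_of_nonneg_left hz hs
        have e2 := mul_le_mul_of_nonneg_left hw ht
        have e3 : k = s * k + t * k := by rw [← add_mul, hst, one_mul]
        rw [e3]; linarith
    exact hsub hz
  obtain ⟨va, hva, hvam⟩ := V.exists_min_image (fun v => v 0) hVne
  obtain ⟨vc, hvc, hvcm⟩ := V.exists_max_image (fun v => v 0) hVne
  obtain ⟨a, ha⟩ : ∃ a, va 0 = a := ⟨_, rfl⟩
  obtain ⟨c, hc⟩ : ∃ c, vc 0 = c := ⟨_, rfl⟩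
  simp only [ha] at hvam
  simp only [hc] at hvcm
  have hac : a ≤ c := by rw [← hc]; exact hvam vc hvc
  obtain ⟨g, G⟩ := exists_upper (c - a).toNat (V.image fun v => (v 0, v 1)) a c hac (by omega)
    (by
      intro v hv
      obtain ⟨w, hw, rfl⟩ := Finset.mem_image.1 hv
      exact ⟨hvam w hw, hvcm w hw⟩)
    ⟨_, Finset.mem_image_of_mem _ hva, ha⟩ ⟨_, Finset.mem_image_of_mem _ hvc, hc⟩
  obtain ⟨f, F⟩ := exists_upper (c - a).toNat (V.image fun v => (v 0, -v 1)) a c hac (by omega)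
    (by
      intro v hv
      obtain ⟨w, hw, rfl⟩ := Finset.mem_image.1 hv
      exact ⟨hvam w hw, hvcm w hw⟩)
    ⟨_, Finset.mem_image_of_mem _ hva, ha⟩ ⟨_, Finset.mem_image_of_mem _ hvc, hc⟩
  have gsupp : ∀ x : ℝ, (a : ℝ) ≤ x → x ≤ c → ∃ m k : ℝ,
      (∀ z ∈ P, z 1 ≤ m * z 0 + k) ∧ g x = m * x + k := by
    intro x h1 h2
    obtain ⟨m, k, e1, e2⟩ := G.supp x h1 h2
    refine ⟨m, k, fun z hz => ?_, e2⟩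
    have := half (-m) 1 k (fun v hv => by
      have := e1 _ (Finset.mem_image_of_mem _ hv)
      simp only at this
      linarith) z hz
    linarith
  have fsupp : ∀ x : ℝ, (a : ℝ) ≤ x → x ≤ c → ∃ m k : ℝ,
      (∀ z ∈ P, -z 1 ≤ m * z 0 + k) ∧ f x = m * x + k := by
    intro x h1 h2
    obtain ⟨m, k, e1, e2⟩ := F.supp x h1 h2
    refine ⟨m, k, fun z hz => ?_, e2⟩
    have := half (-m) (-1) k (fun v hv => by
      have := e1 _ (Finset.mem_image_of_mem _ hv)
      simp only at this
      push_cast at this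
      linarith) z hz
    linarith
  have gmem : ∀ x : ℝ, (a : ℝ) ≤ x → x ≤ c → (![x, g x] : Fin 2 → ℝ) ∈ P := by
    intro x h1 h2
    obtain ⟨v, hv, w, hw, s, t, hs, ht, hst, e1, e2⟩ := G.mem x h1 h2
    obtain ⟨v, hvV, rfl⟩ := Finset.mem_image.1 hv
    obtain ⟨w, hwV, rfl⟩ := Finset.mem_image.1 hw
    convert hconv (hVP v hvV) (hVP w hwV) hs ht hst using 1
    ext j
    fin_cases j
    · simpa [latticeEmbed₂] using e1
    · simpa [latticeEmbed₂] using e2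
  have fmem : ∀ x : ℝ, (a : ℝ) ≤ x → x ≤ c → (![x, -f x] : Fin 2 → ℝ) ∈ P := by
    intro x h1 h2
    obtain ⟨v, hv, w, hw, s, t, hs, ht, hst, e1, e2⟩ := F.mem x h1 h2
    obtain ⟨v, hvV, rfl⟩ := Finset.mem_image.1 hv
    obtain ⟨w, hwV, rfl⟩ := Finset.mem_image.1 hw
    convert hconv (hVP v hvV) (hVP w hwV) hs ht hst using 1
    ext j
    fin_cases j
    · simpa [latticeEmbed₂] using e1
    · push_cast at e2
      simp [latticeEmbed₂]
      linarith
  have memP : ∀ z : Fin 2 → ℝ, z ∈ P ↔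
      ((a : ℝ) ≤ z 0 ∧ z 0 ≤ c) ∧ (-f (z 0) ≤ z 1 ∧ z 1 ≤ g (z 0)) := by
    intro z
    constructor
    · intro hz
      have h1 := half (-1) 0 (-a) (fun v hv => by
        have : (a : ℝ) ≤ v 0 := by exact_mod_cast hvam v hv
        linarith) z hz
      have h2 := half 1 0 c (fun v hv => by
        have : (v 0 : ℝ) ≤ c := by exact_mod_cast hvcm v hv
        linarith) z hz
      have h1' : (a : ℝ) ≤ z 0 := by linarith
      have h2' : z 0 ≤ (c : ℝ) := by linarith
      obtain ⟨m, k, e1, e2⟩ := gsupp _ h1' h2'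
      obtain ⟨m', k', e1', e2'⟩ := fsupp _ h1' h2'
      refine ⟨⟨h1', h2'⟩, ?_, ?_⟩
      · rw [e2']; linarith [e1' z hz]
      · rw [e2]; exact e1 z hz
    · rintro ⟨⟨h1, h2⟩, h3, h4⟩
      have hseg : z 1 ∈ segment ℝ (-f (z 0)) (g (z 0)) := by
        rw [segment_eq_Icc (h3.trans h4)]; exact ⟨h3, h4⟩
      obtain ⟨s, t, hs, ht, hst, e⟩ := hseg
      convert hconv (fmem _ h1 h2) (gmem _ h1 h2) hs ht hst using 1
      ext j
      fin_cases j
      · simp [← add_mul, hst]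
      · simp only [smul_eq_mul] at e
        simp [← e]
  -- moving inside the interior
  have hmove : ∀ z ∈ interior P, ∀ d : Fin 2 → ℝ, ∃ ε : ℝ, 0 < ε ∧ z + ε • d ∈ P := by
    intro z hz d
    have hc0 : Filter.Tendsto (fun ε : ℝ => z + ε • d) (nhds 0) (nhds z) := by
      have : Continuous (fun ε : ℝ => z + ε • d) := by fun_prop
      simpa using this.tendsto 0
    have h1 := hc0 (mem_interior_iff_mem_nhds.1 hz)
    obtain ⟨δ, hδ, h2⟩ := Metric.mem_nhds_iff.1 h1
    exact ⟨δ / 2, by linarith, h2 (by simp [abs_of_pos hδ]; linarith)⟩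
  have intsub : ∀ z ∈ interior P,
      ((a : ℝ) < z 0 ∧ z 0 < c) ∧ (-f (z 0) < z 1 ∧ z 1 < g (z 0)) := by
    intro z hz
    obtain ⟨ε1, p1, q1⟩ := hmove z hz ![1, 0]
    obtain ⟨ε2, p2, q2⟩ := hmove z hz ![-1, 0]
    obtain ⟨ε3, p3, q3⟩ := hmove z hz ![0, 1]
    obtain ⟨ε4, p4, q4⟩ := hmove z hz ![0, -1]
    rw [memP] at q1 q2 q3 q4
    simp at q1 q2 q3 q4
    refine ⟨⟨?_, ?_⟩, ?_, ?_⟩ <;> linarith [q1.1.2, q2.1.1, q3.2.2, q4.2.1]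
  have memI : ∀ z : Fin 2 → ℝ, z ∈ interior P ↔
      ((a : ℝ) < z 0 ∧ z 0 < c) ∧ (-f (z 0) < z 1 ∧ z 1 < g (z 0)) := by
    intro z
    refine ⟨intsub z, fun h => ?_⟩
    have hf := F.cont
    have hg := G.cont
    have hopen : IsOpen {z : Fin 2 → ℝ |
        ((a : ℝ) < z 0 ∧ z 0 < c) ∧ (-f (z 0) < z 1 ∧ z 1 < g (z 0))} := by
      refine IsOpen.and (IsOpen.and ?_ ?_) (IsOpen.and ?_ ?_) <;>
        apply isOpen_lt <;> fun_prop
    refine interior_maximal ?_ hopen h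
    rintro w ⟨⟨h1, h2⟩, h3, h4⟩
    exact (memP w).2 ⟨⟨h1.le, h2.le⟩, h3.le, h4.le⟩
  obtain ⟨z0, hz0⟩ := hPint
  have hz0' := intsub z0 hz0
  have hacR : (a : ℝ) < c := hz0'.1.1.trans hz0'.1.2
  have hac' : a < c := by exact_mod_cast hacR
  have hle : ∀ x : ℝ, (a : ℝ) ≤ x → x ≤ c → -f x ≤ g x := by
    intro x h1 h2
    have := (memP _).1 (gmem x h1 h2)
    simpa using this.2.1
  have hlt : ∀ x : ℝ, (a : ℝ) < x → x < c → -f x < g x := by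
    intro x h1 h2
    obtain ⟨m, k, e1, e2⟩ := gsupp x h1.le h2.le
    obtain ⟨m', k', e1', e2'⟩ := fsupp x h1.le h2.le
    refine lt_of_le_of_ne (hle x h1.le h2.le) fun hcon => ?_
    obtain ⟨ε, hε, q⟩ := hmove z0 hz0 ![0, 1]
    have r1 := e1 _ q
    have r2 := e1' _ (interior_subset hz0)
    simp at r1
    have a1 := e1 _ (gmem a le_rfl hacR.le)
    have a2 := e1' _ (gmem a le_rfl hacR.le)
    have c1 := e1 _ (gmem c hacR.le le_rfl)
    have c2 := e1' _ (gmem c hacR.le le_rfl)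
    simp at a1 a2 c1 c2
    rw [e2, e2'] at hcon
    have da : 0 ≤ (m + m') * (a - x) := by linarith
    have dc : 0 ≤ (m + m') * (c - x) := by linarith
    have dz : 0 < (m + m') * (z0 0 - x) := by linarith
    have : m + m' = 0 := by
      apply le_antisymm
      · by_contra hh
        push Not at hh
        nlinarith
      · by_contra hh
        push Not at hh
        nlinarith
    rw [this] at dz
    simp at dz
  -- area
  have hvol : (volume P).toReal = trap g a c + trap f a c := by
    have h1 : volume P = volume (interior P) :=
      (measure_interior_of_null_frontier (hconv.addHaar_frontier volume)).symm
    have h2 : interior P = MeasurableEquiv.finTwoArrow ⁻¹'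
        (regionBetween (fun x => -f x) g (Set.Ioo (a : ℝ) c)) := by
      ext z
      rw [memI]
      simp [regionBetween, MeasurableEquiv.finTwoArrow]
    have hmeas : MeasurableSet (regionBetween (fun x => -f x) g (Set.Ioo (a : ℝ) c)) :=
      measurableSet_regionBetween F.cont.neg.measurable G.cont.measurable measurableSet_Ioo
    have hif : IntegrableOn (fun x => -f x) (Set.Ioo (a : ℝ) c) :=
      (F.cont.neg.integrableOn_Icc).mono_set Set.Ioo_subset_Icc_self
    have hig : IntegrableOn g (Set.Ioo (a : ℝ) c) :=
      (G.cont.integrableOn_Icc).mono_set Set.Ioo_subset_Icc_self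
    rw [h1, h2, (volume_preserving_finTwoArrow ℝ).measure_preimage hmeas.nullMeasurableSet,
      Measure.volume_eq_prod,
      volume_regionBetween_eq_integral hif hig measurableSet_Ioo
        (fun x hx => hle x hx.1.le hx.2.le), ENNReal.toReal_ofReal]
    · rw [G.area, F.area, ← intervalIntegral.integral_add (G.cont.intervalIntegrable _ _)
        (F.cont.intervalIntegrable _ _), intervalIntegral.integral_of_le hacR.le,
        ← integral_Ioc_eq_integral_Ioo]
      congr 1
      ext x
      simp
    · apply setIntegral_nonneg measurableSet_Ioo
      intro x hx
      have := hle x hx.1.le hx.2.le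
      simp only [Pi.sub_apply]
      linarith
  -- counting
  have hI : i = ∑ x ∈ Finset.Ioo a c, (Finset.Ioo ⌊-f x⌋ ⌈g x⌉).card := by
    rw [hi]
    apply ncard_columns _ (fun x : ℤ => Finset.Ioo ⌊-f x⌋ ⌈g x⌉)
    intro z
    simp [memI, latticeEmbed₂, Int.floor_lt, Int.lt_ceil]
  have hNP : Set.ncard {x : Fin 2 → ℤ | latticeEmbed₂ x ∈ P}
      = ∑ x ∈ Finset.Icc a c, (Finset.Icc ⌈-f x⌉ ⌊g x⌋).card := by
    apply ncard_columns _ (fun x : ℤ => Finset.Icc ⌈-f x⌉ ⌊g x⌋)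
    intro z
    simp only [Set.mem_ofPred_eq, memP, latticeEmbed₂, Finset.mem_Icc, Int.ceil_le, Int.le_floor,
      Int.cast_le]
  have hfin : {x : Fin 2 → ℤ | latticeEmbed₂ x ∈ P}.Finite := by
    apply Set.finite_of_ncard_ne_zero
    intro h0
    rw [hNP, Finset.sum_eq_zero_iff] at h0
    obtain ⟨n, hn⟩ := G.left
    have h1 := h0 a (by simp [hac])
    have h2 := hle a le_rfl hacR.le
    rw [Finset.card_eq_zero] at h1
    have : n ∈ Finset.Icc ⌈-f a⌉ ⌊g a⌋ := by
      rw [Finset.mem_Icc, Int.ceil_le, Int.le_floor, ← hn]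
      exact ⟨h2, le_rfl⟩
    rw [h1] at this
    simp at this
  have hN : i + b = ∑ x ∈ Finset.Icc a c, (Finset.Icc ⌈-f x⌉ ⌊g x⌋).card := by
    rw [← hNP, hi, hb]
    have hu : {x : Fin 2 → ℤ | latticeEmbed₂ x ∈ P} =
        {x : Fin 2 → ℤ | latticeEmbed₂ x ∈ interior P} ∪
        {x : Fin 2 → ℤ | latticeEmbed₂ x ∈ frontier P} := by
      ext x
      simp only [Set.mem_ofPred_eq, Set.mem_union, hclosed.frontier_eq, Set.mem_sdiff]
      have := @interior_subset _ _ P (latticeEmbed₂ x)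
      tauto
    have hfi := hfin
    rw [hu, Set.finite_union] at hfi
    rw [hu, Set.ncard_union_eq _ hfi.1 hfi.2]
    rw [Set.disjoint_left]
    intro x h1 h2
    exact h2.2 h1
  have hIR : (i : ℝ) = ∑ x ∈ Finset.Ioo a c, ((⌈g x⌉ : ℝ) + ⌈f x⌉ - 1) := by
    rw [hI]; push_cast
    refine Finset.sum_congr rfl fun x hx => ?_
    rw [Finset.mem_Ioo] at hx
    have h := hlt x (by exact_mod_cast hx.1) (by exact_mod_cast hx.2)
    rw [Int.card_Ioo, Int.floor_neg]
    have h1 : (0 : ℤ) ≤ ⌈g x⌉ - -⌈f x⌉ - 1 := by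
      have : ⌊-f x⌋ < ⌈g x⌉ := by
        rw [Int.lt_ceil]; exact (Int.floor_le _).trans_lt h
      rw [Int.floor_neg] at this
      omega
    have h2 : (((⌈g x⌉ - -⌈f x⌉ - 1).toNat : ℤ) : ℝ) = ((⌈g x⌉ - -⌈f x⌉ - 1 : ℤ) : ℝ) := by
      rw [Int.toNat_of_nonneg h1]
    rw [Int.cast_natCast] at h2
    rw [h2]; push_cast; ring
  have hcol : ∀ x : ℤ, -1 ≤ ⌊g x⌋ + ⌊f x⌋ →
      (((Finset.Icc ⌈-f x⌉ ⌊g x⌋).card : ℕ) : ℝ) = (⌊g x⌋ : ℝ) + ⌊f x⌋ + 1 := by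
    intro x h
    rw [Int.card_Icc, Int.ceil_neg]
    have h2 : (((⌊g x⌋ + 1 - -⌊f x⌋).toNat : ℤ) : ℝ) = ((⌊g x⌋ + 1 - -⌊f x⌋ : ℤ) : ℝ) := by
      rw [Int.toNat_of_nonneg (by omega)]
    rw [Int.cast_natCast] at h2
    rw [h2]; push_cast; ring
  have hNR : (i : ℝ) + b = ∑ x ∈ Finset.Icc a c, ((⌊g x⌋ : ℝ) + ⌊f x⌋ + 1) := by
    have : (i : ℝ) + b = ((i + b : ℕ) : ℝ) := by push_cast; rfl
    rw [this, hN]; push_cast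
    refine Finset.sum_congr rfl fun x hx => ?_
    rw [Finset.mem_Icc] at hx
    have h := hle x (by exact_mod_cast hx.1) (by exact_mod_cast hx.2)
    apply hcol
    have h1 := Int.lt_floor_add_one (g x)
    have h2 := Int.lt_floor_add_one (f x)
    have h3 : (-2 : ℝ) < ((⌊g x⌋ + ⌊f x⌋ : ℤ) : ℝ) := by push_cast; linarith
    have h4 : (-2 : ℤ) < ⌊g x⌋ + ⌊f x⌋ := by exact_mod_cast h3
    omega
  have hIcc : Finset.Icc a c = insert a (insert c (Finset.Ioo a c)) := by
    ext x; simp only [Finset.mem_Icc, Finset.mem_insert, Finset.mem_Ioo]; omega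
  rw [hIcc, Finset.sum_insert (by simp [hac'.ne]), Finset.sum_insert (by simp)] at hNR
  obtain ⟨ga, hga⟩ := G.left
  obtain ⟨gc, hgc⟩ := G.right
  obtain ⟨fa, hfa⟩ := F.left
  obtain ⟨fc, hfc⟩ := F.right
  have hsum : ∑ x ∈ Finset.Ioo a c, psi (g x) + ∑ x ∈ Finset.Ioo a c, psi (f x)
      = (∑ x ∈ Finset.Ioo a c, ((⌈g x⌉ : ℝ) + ⌈f x⌉ - 1)
        + ∑ x ∈ Finset.Ioo a c, ((⌊g x⌋ : ℝ) + ⌊f x⌋ + 1)) / 2 := by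
    rw [← Finset.sum_add_distrib, ← Finset.sum_add_distrib, Finset.sum_div]
    refine Finset.sum_congr rfl fun x _ => ?_
    unfold psi; ring
  rw [hvol, trap_eq g a c hac', trap_eq f a c hac', hga, hgc, hfa, hfc]
  simp only [psi_int]
  rw [hga, hgc, hfa, hfc] at hNR
  simp only [Int.floor_intCast] at hNR
  rw [← hIR] at hsum
  linarith
end

section
/- Let S ⊂ ℤ³ be a finite set defining a 3-dimensional terminal Fano polytope, i.e.: each s ∈ S is primitive (the gcd of its coordinates is 1), the origin lies in the interior of P := convexHull ℝ S (viewing ℤ³ ⊂ ℝ³), every point of S is an extreme point of P, and P ∩ ℤ³ = S ∪ {0}. Then the cardinality of S is at most 14. -/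
/-- The embedding of the lattice `ℤ³` into `ℝ³`. -/
def latticeEmbed₃ (v : Fin 3 → ℤ) : Fin 3 → ℝ := fun i => (v i : ℝ)

/-- A 3-dimensional terminal Fano polytope has at most 14 vertices. -/
theorem terminal_fano_polytope_card_le_14 (S : Finset (Fin 3 → ℤ))
    (hprim : ∀ s ∈ S, Int.gcd (s 0) (Int.gcd (s 1) (s 2)) = 1)
    (hzero : (0 : Fin 3 → ℝ) ∈
      interior (convexHull ℝ (latticeEmbed₃ '' (S : Set (Fin 3 → ℤ)))))
    (hext : ∀ s ∈ S, latticeEmbed₃ s ∈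
      Set.extremePoints ℝ (convexHull ℝ (latticeEmbed₃ '' (S : Set (Fin 3 → ℤ)))))
    (hlat : ∀ x : Fin 3 → ℤ,
      latticeEmbed₃ x ∈ convexHull ℝ (latticeEmbed₃ '' (S : Set (Fin 3 → ℤ))) ↔
        x ∈ S ∨ x = 0) :
    S.card ≤ 14 := by
  classical
  have key : ∀ s ∈ S, ∀ t ∈ S, (∀ i, ((s i : ℤ) : ZMod 2) = ((t i : ℤ) : ZMod 2)) →
      t = s ∨ t = -s := by
    intro s hs t ht h
    by_contra! hne
    obtain ⟨hne1, hne2⟩ := hne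
    have hdvd : ∀ i, ∃ k : ℤ, s i + t i = 2 * k := by
      intro i
      have h1 := (ZMod.intCast_eq_intCast_iff_dvd_sub (s i) (t i) 2).1 (h i)
      obtain ⟨k, hk⟩ := h1
      push_cast at hk
      exact ⟨s i + k, by linarith⟩
    choose m hm using hdvd
    have hmid : latticeEmbed₃ m ∈ openSegment ℝ (latticeEmbed₃ s) (latticeEmbed₃ t) := by
      refine ⟨1 / 2, 1 / 2, by norm_num, by norm_num, by norm_num, ?_⟩
      funext i
      have h2 : (s i : ℝ) + t i = 2 * m i := by exact_mod_cast hm i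
      simp only [latticeEmbed₃, Pi.add_apply, Pi.smul_apply, smul_eq_mul]
      linarith
    have hmP := (convex_convexHull ℝ (latticeEmbed₃ '' (S : Set (Fin 3 → ℤ)))).openSegment_subset
      (hext s hs).1 (hext t ht).1 hmid
    rcases (hlat m).1 hmP with hmS | hm0
    · have h3 := (mem_extremePoints.1 (hext m hmS)).2 _ (hext s hs).1 _ (hext t ht).1 hmid
      apply hne1
      funext i
      have h4 := congrFun (h3.1.trans h3.2.symm) i
      simp only [latticeEmbed₃] at h4
      exact_mod_cast h4.symm
    · apply hne2
      funext i
      have := hm i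
      simp only [hm0, Pi.zero_apply, Pi.neg_apply] at this ⊢
      linarith
  let f : (Fin 3 → ℤ) → (Fin 3 → ZMod 2) := fun s i => ((s i : ℤ) : ZMod 2)
  have hmaps : ∀ s ∈ S, f s ∈ (Finset.univ.erase 0 : Finset (Fin 3 → ZMod 2)) := by
    intro s hs
    refine Finset.mem_erase.2 ⟨fun h0 => ?_, Finset.mem_univ _⟩
    have hd : ∀ i, (2 : ℤ) ∣ s i := fun i =>
      (ZMod.intCast_zmod_eq_zero_iff_dvd (s i) 2).1 (congrFun h0 i)
    have h1 := Int.dvd_coe_gcd (hd 0) (Int.dvd_coe_gcd (hd 1) (hd 2))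
    rw [hprim s hs] at h1
    norm_num at h1
  have hfib : ∀ c ∈ (Finset.univ.erase 0 : Finset (Fin 3 → ZMod 2)),
      (S.filter (fun s => f s = c)).card ≤ 2 := by
    intro c _
    rcases (S.filter (fun s => f s = c)).eq_empty_or_nonempty with he | ⟨s, hs⟩
    · simp [he]
    · rw [Finset.mem_filter] at hs
      refine (Finset.card_le_card (t := {s, -s}) ?_).trans Finset.card_le_two
      intro t ht
      rw [Finset.mem_filter] at ht
      have := key s hs.1 t ht.1 (fun i => congrFun (hs.2.trans ht.2.symm) i)
      simpa using this
  have hcard := Finset.card_le_mul_card_image_of_maps_to hmaps 2 hfib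
  have h7 : (Finset.univ.erase 0 : Finset (Fin 3 → ZMod 2)).card = 7 := by
    rw [Finset.card_erase_of_mem (Finset.mem_univ _)]
    simp [ZMod.card]
  omega
end

section
/- Let S ⊂ ℤ³ be a finite set defining a 3-dimensional terminal Fano polytope, i.e.: each s ∈ S is primitive (the gcd of its coordinates is 1), the origin lies in the interior of P := convexHull ℝ S (viewing ℤ³ ⊂ ℝ³), every point of S is an extreme point of P, and P ∩ ℤ³ = S ∪ {0}. Let v ∈ ℝ³ be nonzero and c ∈ ℝ be such that P is contained in the half-space {x : ⟨v,x⟩ ≤ c} and the face F := P ∩ {x : ⟨v,x⟩ = c} is two-dimensional (the points of S lying on F affinely span a plane). Then the set S ∩ F has cardinality at most 4; i.e., every two-dimensional face of P is a triangle or a quadrangle. -/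
/-- Reduction modulo 2 of lattice vectors. -/
def redTwo : (Fin 3 → ℤ) →+ (Fin 3 → ZMod 2) where
  toFun x := fun i => (x i : ZMod 2)
  map_zero' := by ext i; simp
  map_add' x y := by ext i; simp

/-- The lattice vectors orthogonal to a real vector `v`. -/
def orthLattice (v : Fin 3 → ℝ) : AddSubgroup (Fin 3 → ℤ) where
  carrier := {x | ∑ i, v i * (x i : ℝ) = 0}
  zero_mem' := by simp
  add_mem' {x y} hx hy := by
    simp only [Set.mem_ofPred_eq, Pi.add_apply, Int.cast_add, mul_add,
      Finset.sum_add_distrib] at *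
    rw [hx, hy, add_zero]
  neg_mem' {x} hx := by
    simp only [Set.mem_ofPred_eq, Pi.neg_apply, Int.cast_neg, mul_neg,
      Finset.sum_neg_distrib] at *
    rw [hx, neg_zero]

/-- The lattice orthogonal to a nonzero vector does not surject onto `(ℤ/2)³`. -/
lemma orthLattice_map_ne_top (v : Fin 3 → ℝ) (hv : v ≠ 0) :
    (orthLattice v).map redTwo ≠ ⊤ := by
  intro h
  have h1 : ∀ j : Fin 3, ∃ x ∈ orthLattice v, redTwo x = Pi.single j 1 := by
    intro j
    have : (Pi.single j 1 : Fin 3 → ZMod 2) ∈ (orthLattice v).map redTwo := by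
      rw [h]; trivial
    exact this
  choose x hx hx2 using h1
  let M : Matrix (Fin 3) (Fin 3) ℤ := Matrix.of x
  have hdet : (M.map (Int.castRingHom ℝ)).det = 0 := by
    rw [← Matrix.exists_mulVec_eq_zero_iff]
    refine ⟨v, hv, ?_⟩
    ext j
    have := hx j
    change ∑ i, v i * (x j i : ℝ) = 0 at this
    simp only [Matrix.mulVec, dotProduct, Matrix.map_apply, M, Matrix.of_apply,
      Pi.zero_apply, eq_intCast]
    rw [← this]
    exact Finset.sum_congr rfl fun i _ => mul_comm _ _
  have hdetZ : M.det = 0 := by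
    have h3 := (Int.castRingHom ℝ).map_det M
    rw [RingHom.mapMatrix_apply, hdet] at h3
    simpa using h3
  have h4 := (Int.castRingHom (ZMod 2)).map_det M
  have h5 : (Int.castRingHom (ZMod 2)).mapMatrix M = 1 := by
    ext i j
    have := congrFun (hx2 i) j
    change ((x i j : ℤ) : ZMod 2) = _ at this
    simp only [RingHom.mapMatrix_apply, Matrix.map_apply, M, Matrix.of_apply, eq_intCast]
    rw [this, Matrix.one_apply, Pi.single_apply]
    simp only [eq_comm]
  rw [h5, hdetZ, Matrix.det_one, map_zero] at h4
  exact zero_ne_one h4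

lemma orthLattice_map_card (v : Fin 3 → ℝ) (hv : v ≠ 0) :
    Nat.card ((orthLattice v).map redTwo) ≤ 4 := by
  set H := (orthLattice v).map redTwo with hH
  have hd : Nat.card H ∣ Nat.card (Fin 3 → ZMod 2) := H.card_addSubgroup_dvd_card
  have h8 : Nat.card (Fin 3 → ZMod 2) = 8 := by simp
  have hne : Nat.card H ≠ Nat.card (Fin 3 → ZMod 2) := fun h =>
    orthLattice_map_ne_top v hv ((AddSubgroup.card_eq_iff_eq_top H).1 h)
  rw [h8] at hd hne
  have hle := Nat.le_of_dvd (by norm_num) hd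
  by_contra hgt
  push Not at hgt
  generalize Nat.card H = n at *
  interval_cases n <;> omega

/-- Every two-dimensional face of a 3-dimensional terminal Fano polytope is a triangle
or a quadrangle: it contains at most 4 vertices of the polytope. -/
theorem terminal_fano_polytope_face_card_le_four (S : Finset (Fin 3 → ℤ))
    (P : Set (Fin 3 → ℝ))
    (hP : P = convexHull ℝ (latticeEmbed₃ '' (S : Set (Fin 3 → ℤ))))
    (hprim : ∀ s ∈ S, Int.gcd (s 0) (Int.gcd (s 1) (s 2)) = 1)
    (hzero : (0 : Fin 3 → ℝ) ∈ interior P)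
    (hext : ∀ s ∈ S, latticeEmbed₃ s ∈ Set.extremePoints ℝ P)
    (hlat : ∀ x : Fin 3 → ℤ, latticeEmbed₃ x ∈ P ↔ x ∈ S ∨ x = 0)
    (v : Fin 3 → ℝ) (hv : v ≠ 0) (c : ℝ)
    (hsupp : ∀ x ∈ P, ∑ i, v i * x i ≤ c)
    (F : Set (Fin 3 → ℝ)) (hF : F = P ∩ {x | ∑ i, v i * x i = c})
    (hdim : Module.finrank ℝ
      ↥(vectorSpan ℝ (latticeEmbed₃ '' {s : Fin 3 → ℤ | s ∈ S ∧ latticeEmbed₃ s ∈ F})) = 2) :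
    Set.ncard {s : Fin 3 → ℤ | s ∈ S ∧ latticeEmbed₃ s ∈ F} ≤ 4 := by
  have hSP : ∀ s ∈ S, latticeEmbed₃ s ∈ P := fun s hs => (hlat s).2 (Or.inl hs)
  have hconv : Convex ℝ P := by rw [hP]; exact convex_convexHull ℝ _
  -- the supporting hyperplane misses the origin
  have hc : c ≠ 0 := by
    rintro rfl
    have h1 : Filter.Tendsto (fun t : ℝ => t • v) (nhdsWithin 0 (Set.Ioi 0)) (nhds 0) := by
      have : Continuous fun t : ℝ => t • v := by fun_prop
      have h := this.tendsto 0
      simp only [zero_smul] at h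
      exact h.mono_left nhdsWithin_le_nhds
    have h2 := h1.eventually (mem_interior_iff_mem_nhds.1 hzero)
    obtain ⟨t, htP, ht⟩ := (h2.and self_mem_nhdsWithin).exists
    have h3 := hsupp _ htP
    have h4 : ∑ i, v i * (t • v) i = t * ∑ i, v i * v i := by
      rw [Finset.mul_sum]
      refine Finset.sum_congr rfl fun i _ => ?_
      simp only [Pi.smul_apply, smul_eq_mul]; ring
    obtain ⟨i, hi⟩ := Function.ne_iff.1 hv
    have h5 : 0 < ∑ i, v i * v i :=
      Finset.sum_pos' (fun i _ => mul_self_nonneg _)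
        ⟨i, Finset.mem_univ _, mul_self_pos.2 hi⟩
    rw [h4] at h3
    have h6 : 0 < t * ∑ i, v i * v i := mul_pos ht h5
    linarith
  set T := {s : Fin 3 → ℤ | s ∈ S ∧ latticeEmbed₃ s ∈ F} with hT
  have hTv : ∀ s ∈ T, ∑ i, v i * (s i : ℝ) = c := by
    rintro s ⟨_, hs⟩
    rw [hF] at hs
    exact hs.2
  rcases T.eq_empty_or_nonempty with h0 | ⟨s₀, hs₀⟩
  · rw [h0]; simp
  refine le_trans ?_ (orthLattice_map_card v hv)
  rw [← SetLike.coe_sort_coe, Nat.card_coe_set_eq]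
  refine Set.ncard_le_ncard_of_injOn (fun s => redTwo (s - s₀)) ?_ ?_ (Set.toFinite _)
  · intro s hs
    refine ⟨s - s₀, ?_, rfl⟩
    change ∑ i, v i * (((s - s₀) i : ℤ) : ℝ) = 0
    simp only [Pi.sub_apply, Int.cast_sub, mul_sub, Finset.sum_sub_distrib]
    rw [hTv s hs, hTv s₀ hs₀, sub_self]
  · intro s hs t ht hst
    have hst' : redTwo s = redTwo t := by
      simpa only [map_sub, sub_left_inj] using hst
    have hpar : ∀ i, ∃ k, s i + t i = 2 * k := by
      intro i
      have h := congrFun hst' i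
      change ((s i : ℤ) : ZMod 2) = (t i : ℤ) at h
      have h' := (ZMod.intCast_eq_intCast_iff_dvd_sub _ _ 2).1 h
      obtain ⟨k, hk⟩ := h'
      exact ⟨s i + k, by push_cast at hk; linarith⟩
    choose m hm using hpar
    have hmR : ∀ i, (m i : ℝ) = (1/2 : ℝ) * s i + (1/2 : ℝ) * t i := by
      intro i
      have : (s i : ℝ) + t i = 2 * m i := by exact_mod_cast hm i
      linarith
    have hmeq : (1/2 : ℝ) • latticeEmbed₃ s + (1/2 : ℝ) • latticeEmbed₃ t
        = latticeEmbed₃ m := by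
      ext i
      simp only [latticeEmbed₃, Pi.add_apply, Pi.smul_apply, smul_eq_mul]
      exact (hmR i).symm
    have hmP : latticeEmbed₃ m ∈ P := by
      rw [← hmeq]
      exact hconv (hSP s hs.1) (hSP t ht.1) (by norm_num) (by norm_num) (by norm_num)
    rcases (hlat m).1 hmP with hmS | rfl
    · have hopen : latticeEmbed₃ m ∈ openSegment ℝ (latticeEmbed₃ s) (latticeEmbed₃ t) :=
        ⟨1/2, 1/2, by norm_num, by norm_num, by norm_num, hmeq⟩
      have hinj : ∀ a b, latticeEmbed₃ a = latticeEmbed₃ b → a = b := by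
        intro a b hab
        ext i
        have := congrFun hab i
        simpa [latticeEmbed₃] using this
      have he := (mem_extremePoints.1 (hext m hmS)).2 _ (hSP s hs.1) _ (hSP t ht.1) hopen
      exact (hinj _ _ he.1).trans (hinj _ _ he.2).symm
    · exfalso
      apply hc
      have h1 := hTv s hs
      have h2 := hTv t ht
      have h3 : ∑ i, v i * (s i : ℝ) + ∑ i, v i * (t i : ℝ) = 0 := by
        rw [← Finset.sum_add_distrib]
        refine Finset.sum_eq_zero fun i _ => ?_
        have := hmR i
        simp only [Pi.zero_apply, Int.cast_zero] at this
        rw [← mul_add]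
        have h : (s i : ℝ) + t i = 0 := by linarith
        rw [h, mul_zero]
      linarith
end

section
/- Let G be a finite subgroup of GL(3,ℤ), the group of invertible 3×3 integer matrices, and let n be a natural number with 5 ≤ n ≤ 14 such that n divides the order of G. Then n = 6, n = 8, or n = 12. -/
theorem aux_pow_expand {R : Type*} [Ring R] (N : R) (m : ℕ) :
    ∃ Q : R, (1 + N) ^ m = 1 + (m : R) * N + N * N * Q := by
  induction m with
  | zero => exact ⟨0, by simp⟩
  | succ m ih =>
    obtain ⟨Q, hQ⟩ := ih
    refine ⟨(m : R) + Q * (1 + N), ?_⟩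
    have hc : N * N * (m : R) = (m : R) * N * N := by
      rw [mul_assoc, ← (Nat.cast_commute m N).eq, ← mul_assoc, ← (Nat.cast_commute m N).eq]
    rw [pow_succ, hQ, mul_add (N * N), hc]
    push_cast
    noncomm_ring

/-- A matrix congruent to `1` modulo `p`, of finite order prime to `p`, is `1`. -/
theorem aux_kernel (p m : ℕ) (hp : p.Prime) (hm : Nat.Coprime p m)
    (N : Matrix (Fin 3) (Fin 3) ℤ) (h1 : ∀ i j, (p : ℤ) ∣ N i j)
    (hN : (1 + N) ^ m = 1) : N = 0 := by
  obtain ⟨Q, hQ⟩ := aux_pow_expand N m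
  rw [hN, add_assoc] at hQ
  have hQ' : (m : Matrix (Fin 3) (Fin 3) ℤ) * N + N * N * Q = 0 := left_eq_add.mp hQ
  have hcop : IsCoprime (p : ℤ) (m : ℤ) := Nat.isCoprime_iff_coprime.mpr hm
  have key : ∀ k : ℕ, ∀ i j, (p : ℤ) ^ (k + 1) ∣ N i j := by
    intro k
    induction k with
    | zero => simpa using h1
    | succ k ih =>
      intro i j
      have e := congrFun (congrFun hQ' i) j
      rw [← nsmul_eq_mul] at e
      rw [Matrix.add_apply, Matrix.smul_apply, Matrix.zero_apply, nsmul_eq_mul] at e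
      have hd : (p : ℤ) ^ (k + 1 + 1) ∣ (N * N * Q) i j := by
        rw [Matrix.mul_apply]
        refine Finset.dvd_sum fun l _ => Dvd.dvd.mul_right ?_ _
        rw [Matrix.mul_apply]
        refine Finset.dvd_sum fun t _ => ?_
        rw [pow_succ]
        exact mul_dvd_mul (ih i t) (h1 t l)
      have h2 : (p : ℤ) ^ (k + 1 + 1) ∣ (m : ℤ) * N i j := by
        rw [eq_neg_of_add_eq_zero_left e]
        exact (dvd_neg).mpr hd
      exact (hcop.pow_left).dvd_of_dvd_mul_left h2
  ext i j
  by_contra hne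
  have hfin : FiniteMultiplicity (p : ℤ) (N i j) := by
    rw [Int.finiteMultiplicity_iff]
    exact ⟨by simpa using hp.one_lt.ne', hne⟩
  obtain ⟨k, hk⟩ := hfin
  exact hk (key k i j)

theorem aux_dvd (G : Subgroup (Matrix.GeneralLinearGroup (Fin 3) ℤ)) [Finite G]
    (p q a : ℕ) [hp : Fact p.Prime] [hq : Fact q.Prime] (hpq : p ≠ q)
    (h : q ^ a ∣ Nat.card G) :
    q ^ a ∣ ∏ i : Fin 3, (p ^ 3 - p ^ (i : ℕ)) := by
  obtain ⟨K, hK⟩ := Sylow.exists_subgroup_card_pow_prime q h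
  have hcard := Matrix.card_GL_field (𝔽 := ZMod p) 3
  rw [ZMod.card] at hcard
  rw [← hcard, ← hK]
  let f : K →* Matrix.GeneralLinearGroup (Fin 3) (ZMod p) :=
    (Matrix.GeneralLinearGroup.map (Int.castRingHom (ZMod p))).comp (G.subtype.comp K.subtype)
  refine Subgroup.card_dvd_of_injective f ?_
  rw [injective_iff_map_eq_one]
  intro g hg
  have hpow : g ^ (q ^ a) = 1 := by rw [← hK]; exact pow_card_eq_one'
  have hpow' : (((g : G) : Matrix.GeneralLinearGroup (Fin 3) ℤ) :
      Matrix (Fin 3) (Fin 3) ℤ) ^ (q ^ a) = 1 := by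
    have := congrArg (fun x : K => (((x : G) : Matrix.GeneralLinearGroup (Fin 3) ℤ) :
      Matrix (Fin 3) (Fin 3) ℤ)) hpow
    simpa using this
  have hz := aux_kernel p (q ^ a) hp.out
    (((Nat.coprime_primes hp.out hq.out).mpr hpq).pow_right a)
    ((((g : G) : Matrix.GeneralLinearGroup (Fin 3) ℤ) : Matrix (Fin 3) (Fin 3) ℤ) - 1)
    (by
      intro i j
      rw [← ZMod.intCast_zmod_eq_zero_iff_dvd]
      have := congrArg (fun x : Matrix.GeneralLinearGroup (Fin 3) (ZMod p) =>
        (x : Matrix (Fin 3) (Fin 3) (ZMod p)) i j) hg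
      simp [f] at this
      simp [this, Matrix.one_apply])
    (by rw [add_sub_cancel]; exact hpow')
  apply Subtype.ext
  apply Subtype.ext
  apply Units.ext
  simpa [sub_eq_zero] using hz

/-- If `n` with `5 ≤ n ≤ 14` divides the order of a finite subgroup of `GL(3,ℤ)`,
then `n = 6`, `n = 8` or `n = 12`. -/
theorem divisor_of_finite_subgroup_GL3Z
    (G : Subgroup (Matrix.GeneralLinearGroup (Fin 3) ℤ)) (hG : Finite G)
    (n : ℕ) (h5 : 5 ≤ n) (h14 : n ≤ 14) (hdvd : n ∣ Nat.card G) :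
    n = 6 ∨ n = 8 ∨ n = 12 := by
  have : Fact (Nat.Prime 3) := ⟨by norm_num⟩
  have : Fact (Nat.Prime 5) := ⟨by norm_num⟩
  have : Fact (Nat.Prime 7) := ⟨by norm_num⟩
  have : Fact (Nat.Prime 11) := ⟨by norm_num⟩
  have : Fact (Nat.Prime 13) := ⟨by norm_num⟩
  have c5 : ¬ 5 ∣ Nat.card G := fun h => by
    have := aux_dvd G 3 5 1 (by norm_num) (by simpa using h)
    norm_num [Fin.prod_univ_three] at this
  have c7 : ¬ 7 ∣ Nat.card G := fun h => by
    have := aux_dvd G 3 7 1 (by norm_num) (by simpa using h)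
    norm_num [Fin.prod_univ_three] at this
  have c11 : ¬ 11 ∣ Nat.card G := fun h => by
    have := aux_dvd G 3 11 1 (by norm_num) (by simpa using h)
    norm_num [Fin.prod_univ_three] at this
  have c13 : ¬ 13 ∣ Nat.card G := fun h => by
    have := aux_dvd G 5 13 1 (by norm_num) (by simpa using h)
    norm_num [Fin.prod_univ_three] at this
  have c9 : ¬ 9 ∣ Nat.card G := fun h => by
    have := aux_dvd G 5 3 2 (by norm_num) (by simpa using h)
    norm_num [Fin.prod_univ_three] at this
  generalize Nat.card G = c at *
  interval_cases n <;> omega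
end

section
/- Every subgroup of order 3 of GL(3,ℤ) is conjugate in GL(3,ℤ) to exactly one of the two subgroups W₁ = ⟨A₁⟩ and W₂ = ⟨A₂⟩, where A₁ is the matrix with rows (1,0,0), (0,0,−1), (0,1,−1) and A₂ is the cyclic permutation matrix with rows (0,1,0), (0,0,1), (1,0,0); moreover W₁ and W₂ are not conjugate to each other. -/
/-- The matrix with rows `(1,0,0)`, `(0,0,-1)`, `(0,1,-1)`, as an element of `GL(3,ℤ)`.
Its inverse is its square, since it has order 3. -/
def genA₁ : Matrix.GeneralLinearGroup (Fin 3) ℤ :=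
  ⟨!![1,0,0; 0,0,-1; 0,1,-1], !![1,0,0; 0,0,-1; 0,1,-1] * !![1,0,0; 0,0,-1; 0,1,-1],
    by decide, by decide⟩

/-- The cyclic permutation matrix with rows `(0,1,0)`, `(0,0,1)`, `(1,0,0)`, as an element
of `GL(3,ℤ)`.  Its inverse is its square. -/
def genA₂ : Matrix.GeneralLinearGroup (Fin 3) ℤ :=
  ⟨!![0,1,0; 0,0,1; 1,0,0], !![0,1,0; 0,0,1; 1,0,0] * !![0,1,0; 0,0,1; 1,0,0],
    by decide, by decide⟩

/-- Two subgroups of `GL(3,ℤ)` are conjugate if one maps onto the other under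
conjugation by some element. -/
def IsConjSubgroup (H K : Subgroup (Matrix.GeneralLinearGroup (Fin 3) ℤ)) : Prop :=
  ∃ g : Matrix.GeneralLinearGroup (Fin 3) ℤ,
    Subgroup.map (MulAut.conj g).toMonoidHom H = K

lemma gcd2 (a b : ℤ) : ∃ g a' b' s t : ℤ, a = g * a' ∧ b = g * b' ∧ s * a' + t * b' = 1 := by
  by_cases h : Int.gcd a b = 0
  · rw [Int.gcd_eq_zero_iff] at h
    exact ⟨0, 1, 0, 1, 0, by simp [h.1], by simp [h.2], by norm_num⟩
  · obtain ⟨a', ha⟩ := Int.gcd_dvd_left a b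
    obtain ⟨b', hb⟩ := Int.gcd_dvd_right a b
    have hg : ((Int.gcd a b : ℕ) : ℤ) ≠ 0 := by exact_mod_cast h
    refine ⟨Int.gcd a b, a', b', Int.gcdA a b, Int.gcdB a b, ha, hb, ?_⟩
    have := Int.gcd_eq_gcd_ab a b
    apply mul_left_cancel₀ hg
    linear_combination -this - Int.gcdA a b * ha - Int.gcdB a b * hb

/-- A binary quadratic form of discriminant -3 represents a unit. -/
lemma form_unit (n : ℕ) : ∀ p q r : ℤ, p ^ 2 + p + 1 + q * r = 0 → r.natAbs = n →
    ∃ x y : ℤ, (r * x ^ 2 - (1 + 2 * p) * (x * y) - q * y ^ 2) ^ 2 = 1 := by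
  induction n using Nat.strong_induction_on with
  | _ n ih =>
    intro p q r h hn
    by_cases h1 : r ^ 2 = 1
    · exact ⟨1, 0, by linear_combination h1⟩
    have hr : r ≠ 0 := by
      rintro rfl
      nlinarith [sq_nonneg (2 * p + 1)]
    -- shift
    obtain ⟨k, hk⟩ : ∃ k : ℤ, |2 * (p + k * r) + 1| ≤ |r| := by
      have e := Int.emod_add_mul_ediv p |r|
      have l0 := Int.emod_nonneg p (abs_ne_zero.mpr hr)
      have l1 := Int.emod_lt_of_pos p (abs_pos.mpr hr)
      obtain ⟨σ, hσ⟩ : ∃ σ : ℤ, |r| = σ * r := by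
        rcases abs_choice r with h | h
        · exact ⟨1, by simp [h]⟩
        · exact ⟨-1, by simp [h]⟩
      by_cases hc : 2 * (p % |r|) + 1 ≤ |r|
      · refine ⟨-(σ * (p / |r|)), ?_⟩
        have : p + -(σ * (p / |r|)) * r = p % |r| := by
          linear_combination (-1 : ℤ) * e + (p / |r|) * hσ
        rw [this, abs_le]
        constructor <;> linarith
      · refine ⟨-(σ * (p / |r| + 1)), ?_⟩
        have : p + -(σ * (p / |r| + 1)) * r = p % |r| - |r| := by
          linear_combination (-1 : ℤ) * e + (p / |r| + 1) * hσ
        rw [this, abs_le]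
        constructor <;> linarith
    obtain ⟨p', hp'⟩ : ∃ p', p' = p + k * r := ⟨_, rfl⟩
    obtain ⟨q', hq'⟩ : ∃ q', q' = q - (2 * p + 1) * k - k ^ 2 * r := ⟨_, rfl⟩
    rw [← hp'] at hk
    have h' : p' ^ 2 + p' + 1 + q' * r = 0 := by
      rw [hp', hq']; linear_combination h
    have hlt : q'.natAbs < r.natAbs := by
      have h2 := sq_le_sq.mpr hk
      have hz : |q'| * |r| * 4 ≤ |r| * |r| + 3 := by
        rw [← abs_mul, abs_mul_abs_self]
        have : |q' * r| = p' ^ 2 + p' + 1 := by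
          rw [show q' * r = -(p' ^ 2 + p' + 1) by linarith, abs_neg, abs_of_nonneg]
          nlinarith [sq_nonneg (2 * p' + 1)]
        nlinarith
      have hr2 : 2 ≤ |r| := by
        have := abs_pos.mpr hr
        by_contra hcon
        have : |r| = 1 := by omega
        apply h1
        rw [← sq_abs, this]; norm_num
      zify
      by_contra hcon
      push Not at hcon
      nlinarith
    obtain ⟨x, y, hxy⟩ := ih q'.natAbs (hn ▸ hlt) (-1 - p') r q'
      (by linear_combination h') rfl
    refine ⟨y - k * x, x, ?_⟩
    have e : r * (y - k * x) ^ 2 - (1 + 2 * p) * ((y - k * x) * x) - q * x ^ 2 =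
        -(q' * x ^ 2 - (1 + 2 * (-1 - p')) * (x * y) - r * y ^ 2) := by
      rw [hp', hq']; ring
    rw [e, neg_sq, hxy]

abbrev G3 := Matrix.GeneralLinearGroup (Fin 3) ℤ

lemma conj_of (A B : G3) (P : Matrix (Fin 3) (Fin 3) ℤ) (hP : P.det ^ 2 = 1)
    (h : (A : Matrix (Fin 3) (Fin 3) ℤ) * P = P * (B : Matrix (Fin 3) (Fin 3) ℤ)) :
    IsConj A B := by
  have hu : IsUnit P.det := IsUnit.of_mul_eq_one P.det (by rw [← sq, hP])
  let g : G3 := Matrix.GeneralLinearGroup.mk'' P hu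
  rw [isConj_comm, isConj_iff]
  refine ⟨g, ?_⟩
  rw [mul_inv_eq_iff_eq_mul]
  apply Units.ext
  exact h.symm

/-- a vector fixed by a matrix of order dividing three -/
lemma exists_fixed (M : Matrix (Fin 3) (Fin 3) ℤ) (h3 : M ^ 3 = 1) :
    ∃ v : Fin 3 → ℤ, v ≠ 0 ∧ M.mulVec v = v := by
  have hd : (M - 1).det = 0 := by
    by_contra hd
    have e : (M - 1) * (M ^ 2 + M + 1) = 0 := by
      have : (M - 1) * (M ^ 2 + M + 1) = M ^ 3 - 1 := by noncomm_ring
      rw [this, h3, sub_self]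
    have e2 : M ^ 2 + M + 1 = 0 := by
      have := congrArg (fun X => (M - 1).adjugate * X) e
      simp only [← mul_assoc, Matrix.adjugate_mul, Matrix.mul_zero] at this
      rw [Matrix.smul_mul, one_mul, smul_eq_zero] at this
      exact this.resolve_left hd
    have e3 : (2 * M + 1) * (2 * M + 1) = (-3 : ℤ) • (1 : Matrix (Fin 3) (Fin 3) ℤ) := by
      have : (2 * M + 1) * (2 * M + 1) = 4 * (M ^ 2 + M + 1) + (-3 : ℤ) • 1 := by noncomm_ring
      rw [this, e2, mul_zero, zero_add]
    have e4 := congrArg Matrix.det e3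
    rw [Matrix.det_mul, Matrix.det_smul] at e4
    simp at e4
    nlinarith [mul_self_nonneg (2 * M + 1).det]
  obtain ⟨v, hv, h⟩ := Matrix.exists_mulVec_eq_zero_iff.mpr hd
  refine ⟨v, hv, ?_⟩
  rw [Matrix.sub_mulVec, Matrix.one_mulVec] at h
  exact sub_eq_zero.mp h

lemma step1 (A : G3) (h3 : A ^ 3 = 1) : ∃ B : G3, IsConj A B ∧
    B.1 0 0 = 1 ∧ B.1 1 0 = 0 ∧ B.1 2 0 = 0 := by
  obtain ⟨v, hv, hf⟩ := exists_fixed A.1 (by simpa using congrArg Units.val h3)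
  obtain ⟨g, a, b, s, t, h0, h1, hst⟩ := gcd2 (v 0) (v 1)
  obtain ⟨k, g', c, u, w, hg, h2, huw⟩ := gcd2 g (v 2)
  have hk : k ≠ 0 := by
    rintro rfl
    apply hv
    ext i
    fin_cases i <;> simp_all
  have hvk : v = k • ![g' * a, g' * b, c] := by
    ext i
    fin_cases i
    · simp [h0, hg, mul_assoc]
    · simp [h1, hg, mul_assoc]
    · simp [h2]
  have hf' : A.1.mulVec ![g' * a, g' * b, c] = ![g' * a, g' * b, c] := by
    rw [hvk, Matrix.mulVec_smul] at hf
    exact smul_right_injective _ hk hf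
  let P : Matrix (Fin 3) (Fin 3) ℤ := !![g' * a, -t, -w * a; g' * b, s, -w * b; c, 0, u]
  have hP : P.det = 1 := by
    simp only [P, Matrix.det_fin_three]
    simp
    linear_combination huw + (u * g' + w * c) * hst
  let g : G3 := Matrix.GeneralLinearGroup.mk'' P (by rw [hP]; exact isUnit_one)
  refine ⟨g⁻¹ * A * g, ?_, ?_⟩
  · rw [isConj_iff]
    exact ⟨g⁻¹, by simp⟩
  · have e : (g⁻¹ * A * g : G3).1.mulVec ![1, 0, 0] = ![1, 0, 0] := by
      have e1 : g.1.mulVec ![1, 0, 0] = ![g' * a, g' * b, c] := by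
        ext i
        fin_cases i <;> simp [g, P, Matrix.mulVec, dotProduct, Fin.sum_univ_three, Matrix.GeneralLinearGroup.mk'', Matrix.nonsingInvUnit]
      rw [Units.val_mul, Units.val_mul, ← Matrix.mulVec_mulVec, ← Matrix.mulVec_mulVec, e1, hf', ← e1,
        Matrix.mulVec_mulVec, ← Units.val_mul]
      simp
    have e0 := congrFun e 0
    have e1 := congrFun e 1
    have e2 := congrFun e 2
    simp only [Matrix.mulVec, dotProduct, Fin.sum_univ_three] at e0 e1 e2
    simp only [Matrix.cons_val, mul_one, mul_zero, add_zero] at e0 e1 e2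
    exact ⟨e0, e1, e2⟩

lemma step2 (a b p q r s : ℤ) 
    (h3 : (!![1, a, b; 0, p, q; 0, r, s] : Matrix (Fin 3) (Fin 3) ℤ) ^ 3 = 1)
    (hne : (!![1, a, b; 0, p, q; 0, r, s] : Matrix (Fin 3) (Fin 3) ℤ) ≠ 1) :
    s = -1 - p ∧ p ^ 2 + p + 1 + q * r = 0 := by
  have hd := congrArg Matrix.det h3
  rw [Matrix.det_pow, Matrix.det_fin_three] at hd
  simp at hd
  have hd1 : p * s - q * r = 1 := by
    set d := p * s - q * r
    have : (d - 1) * (d ^ 2 + d + 1) = 0 := by linear_combination hd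
    rcases mul_eq_zero.mp this with h | h
    · linarith
    · nlinarith [sq_nonneg (2 * d + 1)]
  have E : ∀ i j, ((!![1, a, b; 0, p, q; 0, r, s] : Matrix (Fin 3) (Fin 3) ℤ) ^ 3) i j = (1 : Matrix (Fin 3) (Fin 3) ℤ) i j := by
    rw [h3]; simp
  have E01 := E 0 1
  have E02 := E 0 2
  have E11 := E 1 1
  have E12 := E 1 2
  have E21 := E 2 1
  have E22 := E 2 2
  simp [pow_succ, Matrix.mul_apply, Fin.sum_univ_three] at E01 E02 E11 E12 E21 E22
  have F11 : ((p + s) ^ 2 - 1) * p = 1 + (p + s) := by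
    linear_combination E11 + (2 * p + s) * hd1 
  have F22 : ((p + s) ^ 2 - 1) * s = 1 + (p + s) := by
    linear_combination E22 + (p + 2 * s) * hd1
  have F12 : ((p + s) ^ 2 - 1) * q = 0 := by
    linear_combination E12 + q * hd1
  have F21 : ((p + s) ^ 2 - 1) * r = 0 := by
    linear_combination E21 + r * hd1
  by_cases ht : (p + s) ^ 2 - 1 = 0
  · rw [ht] at F11
    have hs : s = -1 - p := by linarith
    refine ⟨hs, ?_⟩
    subst hs
    linear_combination -hd1
  · exfalso
    have hq : q = 0 := (mul_eq_zero.mp F12).resolve_left ht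
    have hr : r = 0 := (mul_eq_zero.mp F21).resolve_left ht
    have hps : p = s := mul_left_cancel₀ ht (F11.trans F22.symm)
    subst hq hr hps
    have hp : p = 1 := by
      have : p * (p * p) = 1 := by linear_combination E11
      nlinarith
    subst hp
    have ha : a = 0 := by linarith
    have hb : b = 0 := by linarith
    apply hne
    subst ha hb
    ext i j
    fin_cases i <;> fin_cases j <;> rfl

lemma mk_GL (M : Matrix (Fin 3) (Fin 3) ℤ) (h : M.det = 1) : ∃ B : G3, B.1 = M :=
  ⟨Matrix.GeneralLinearGroup.mk'' M (by rw [h]; exact isUnit_one), rfl⟩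

lemma step3 (A : G3) (a b p q r s : ℤ) (hA : A.1 = !![1, a, b; 0, p, q; 0, r, s])
    (hs : s = -1 - p) (h : p ^ 2 + p + 1 + q * r = 0) :
    ∃ (a' b' : ℤ) (B : G3), B.1 = !![1, a', b'; 0, 0, -1; 0, 1, -1] ∧ IsConj A B := by
  obtain ⟨x, y, hxy⟩ := form_unit _ p q r h rfl
  obtain ⟨B, hB⟩ := mk_GL !![1, a * x + b * y, a * (p * x + q * y) + b * (r * x + s * y); 0, 0, -1; 0, 1, -1]
    (by rw [Matrix.det_fin_three]; simp)
  refine ⟨_, _, B, hB, ?_⟩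
  apply conj_of A B !![1, 0, 0; 0, x, p * x + q * y; 0, y, r * x + s * y]
  · refine Eq.trans (congrArg (· ^ 2) ?_) hxy
    rw [Matrix.det_fin_three]
    subst hs
    simp
    ring
  · rw [hA, hB]
    subst hs
    ext i j
    fin_cases i <;> fin_cases j <;> simp [Matrix.mul_apply, Fin.sum_univ_three]
    · linear_combination x * h
    · linear_combination y * h

lemma step4 (A : G3) (a b : ℤ) (hA : A.1 = !![1, a, b; 0, 0, -1; 0, 1, -1]) :
    IsConj A genA₁ ∨ IsConj A genA₂ := by
  obtain ⟨y, e, hy, he⟩ : ∃ y e : ℤ, a - b + 3 * y = e ∧ (e = 0 ∨ e ^ 2 = 1) := by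
    have : (a - b) % 3 = 0 ∨ (a - b) % 3 = 1 ∨ (a - b) % 3 = 2 := by omega
    rcases this with h | h | h
    · exact ⟨-((a - b) / 3), 0, by omega, by norm_num⟩
    · exact ⟨-((a - b) / 3), 1, by omega, by norm_num⟩
    · exact ⟨-((a - b) / 3) - 1, -1, by omega, by norm_num⟩
  obtain ⟨B, hB⟩ := mk_GL !![1, e, 0; 0, 0, -1; 0, 1, -1] (by rw [Matrix.det_fin_three]; simp)
  have hAB : IsConj A B := by
    rw [isConj_comm]
    apply conj_of B A !![1, b - 2 * y, y; 0, 1, 0; 0, 0, 1]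
    · rw [Matrix.det_fin_three]; simp
    · rw [hA, hB]
      ext i j
      fin_cases i <;> fin_cases j <;> simp [Matrix.mul_apply, Fin.sum_univ_three] <;> linarith
  rcases he with rfl | he
  · left
    convert hAB
    apply Units.ext
    rw [hB]; rfl
  · right
    refine hAB.trans (IsConj.symm ?_)
    apply conj_of genA₂ B !![1, 0, 0; 1, e, 0; 1, e, -e]
    · rw [Matrix.det_fin_three]; rcases (sq_eq_sq_iff_eq_or_eq_neg.mp (he.trans (one_pow 2).symm)) with rfl | rfl <;> simp
    · rw [hB]
      ext i j
      fin_cases i <;> fin_cases j <;> simp [genA₂, Matrix.mul_apply, Fin.sum_univ_three] 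

lemma conj_main (A : G3) (h3 : A ^ 3 = 1) (h1 : A ≠ 1) : IsConj A genA₁ ∨ IsConj A genA₂ := by
  obtain ⟨B, hAB, h00, h10, h20⟩ := step1 A h3
  have hB : B.1 = !![1, B.1 0 1, B.1 0 2; 0, B.1 1 1, B.1 1 2; 0, B.1 2 1, B.1 2 2] := by
    ext i j
    fin_cases i <;> fin_cases j <;> simp [h00, h10, h20]
  obtain ⟨g, hg⟩ := isConj_iff.mp hAB
  have hB3 : B ^ 3 = 1 := by rw [← hg, conj_pow, h3]; simp
  have hB1 : B ≠ 1 := by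
    rintro rfl
    exact h1 (isConj_one_right.mp hAB.symm)
  obtain ⟨hs, h⟩ := step2 (B.1 0 1) (B.1 0 2) (B.1 1 1) (B.1 1 2) (B.1 2 1) (B.1 2 2)
    (by rw [← hB]; simpa using congrArg Units.val hB3)
    (by rw [← hB]; intro h; exact hB1 (Units.ext h))
  obtain ⟨a, b, C, hC, hBC⟩ := step3 B _ _ _ _ _ _ hB hs h
  rcases step4 C a b hC with h | h
  · exact .inl ((hAB.trans hBC).trans h)
  · exact .inr ((hAB.trans hBC).trans h)

lemma conj_zpowers {A B : G3} (h : IsConj A B) :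
    IsConjSubgroup (Subgroup.zpowers A) (Subgroup.zpowers B) := by
  obtain ⟨g, hg⟩ := isConj_iff.mp h
  refine ⟨g, ?_⟩
  rw [MonoidHom.map_zpowers]
  simp [hg]

lemma conjSub_symm {H K : Subgroup G3} (h : IsConjSubgroup H K) : IsConjSubgroup K H := by
  obtain ⟨g, rfl⟩ := h
  refine ⟨g⁻¹, ?_⟩
  rw [Subgroup.map_map]
  convert Subgroup.map_id H
  ext x : 1
  simp [mul_assoc]

lemma conjSub_trans {H K L : Subgroup G3} (h : IsConjSubgroup H K) (h' : IsConjSubgroup K L) :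
    IsConjSubgroup H L := by
  obtain ⟨g, rfl⟩ := h
  obtain ⟨g', rfl⟩ := h'
  refine ⟨g' * g, ?_⟩
  rw [Subgroup.map_map]
  congr 1
  ext x : 1
  simp [mul_assoc]

lemma not_conj : ¬ IsConjSubgroup (Subgroup.zpowers genA₁) (Subgroup.zpowers genA₂) := by
  rintro ⟨g, hg⟩
  have hm : genA₂ ∈ Subgroup.map (MulAut.conj g).toMonoidHom (Subgroup.zpowers genA₁) := by
    rw [hg]; exact Subgroup.mem_zpowers _
  obtain ⟨x, hx, hx2⟩ := hm
  have hN : ∃ N : Matrix (Fin 3) (Fin 3) ℤ, (x.1 - 1) ^ 2 = (3 : ℤ) • N := by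
    obtain ⟨k, rfl⟩ := hx
    have h3 : genA₁ ^ (3 : ℤ) = 1 := by
      apply Units.ext
      show genA₁.1 ^ 3 = 1
      simp only [genA₁]; decide
    have hk : genA₁ ^ k = genA₁ ^ (k % 3) := by
      conv_lhs => rw [← Int.emod_add_mul_ediv k 3, zpow_add, zpow_mul, h3, one_zpow, mul_one]
    have : k % 3 = 0 ∨ k % 3 = 1 ∨ k % 3 = 2 := by omega
    simp only [hk]
    rcases this with h | h | h <;> rw [h]
    · exact ⟨0, by simp⟩
    · exact ⟨!![0, 0, 0; 0, 0, 1; 0, -1, 1], by rw [zpow_one]; simp only [genA₁]; decide⟩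
    · refine ⟨!![0, 0, 0; 0, 1, -1; 0, 1, 0], ?_⟩
      show (genA₁.1 ^ 2 - 1) ^ 2 = _
      simp only [genA₁]; decide
  obtain ⟨N, hN⟩ := hN
  have hx3 : genA₂ = g * x * g⁻¹ := by rw [← hx2]; rfl
  have e : (genA₂.1 - 1) ^ 2 = (3 : ℤ) • (g.1 * N * g⁻¹.1) := by
    have e1 : genA₂.1 - 1 = g.1 * (x.1 - 1) * g⁻¹.1 := by
      rw [hx3, mul_sub, sub_mul, mul_one, Units.mul_inv]; rfl
    have e2 : g⁻¹.1 * g.1 = 1 := Units.inv_mul g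
    calc (genA₂.1 - 1) ^ 2 = g.1 * (x.1 - 1) * (g⁻¹.1 * g.1) * (x.1 - 1) * g⁻¹.1 := by
          rw [e1, sq]; simp only [mul_assoc]
      _ = g.1 * (x.1 - 1) ^ 2 * g⁻¹.1 := by rw [e2, sq]; simp only [mul_assoc, one_mul]
      _ = _ := by rw [hN, mul_smul_comm, smul_mul_assoc]
  have e00 := congrFun (congrFun e 0) 0
  have : ((genA₂.1 - 1) ^ 2 : Matrix (Fin 3) (Fin 3) ℤ) 0 0 = 1 := by simp only [genA₂]; decide
  rw [this, Matrix.smul_apply, smul_eq_mul] at e00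
  omega

/-- Every subgroup of order 3 of `GL(3,ℤ)` is conjugate to exactly one of the two cyclic
subgroups `W₁ = ⟨A₁⟩` and `W₂ = ⟨A₂⟩`; moreover `W₁` and `W₂` are not conjugate. -/
theorem subgroups_of_order_three_in_GL3Z :
    (∀ H : Subgroup (Matrix.GeneralLinearGroup (Fin 3) ℤ), Nat.card H = 3 →
      ((IsConjSubgroup H (Subgroup.zpowers genA₁) ∧
          ¬ IsConjSubgroup H (Subgroup.zpowers genA₂)) ∨
        (IsConjSubgroup H (Subgroup.zpowers genA₂) ∧
          ¬ IsConjSubgroup H (Subgroup.zpowers genA₁)))) ∧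
    ¬ IsConjSubgroup (Subgroup.zpowers genA₁) (Subgroup.zpowers genA₂) := by
  refine ⟨fun H hH => ?_, not_conj⟩
  obtain ⟨h, hh, rfl⟩ : ∃ h : G3, orderOf h = 3 ∧ H = Subgroup.zpowers h := by
    have : Fact (Nat.Prime 3) := ⟨Nat.prime_three⟩
    have := isCyclic_of_prime_card hH
    obtain ⟨⟨h, hm⟩, hgen⟩ := IsCyclic.exists_generator (α := H)
    have : H = Subgroup.zpowers h := by
      apply le_antisymm
      · intro x hx
        obtain ⟨k, hk⟩ := hgen ⟨x, hx⟩
        exact ⟨k, by simpa using congrArg Subtype.val hk⟩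
      · simpa using hm
    refine ⟨h, ?_, this⟩
    rw [← Nat.card_zpowers, ← this, hH]
  have h3 : h ^ 3 = 1 := by simpa [hh] using pow_orderOf_eq_one h
  have h1 : h ≠ 1 := by
    rintro rfl
    simp at hh
  rcases conj_main h h3 h1 with hc | hc
  · have := conj_zpowers hc
    exact .inl ⟨this, fun h' => not_conj (conjSub_trans (conjSub_symm this) h')⟩
  · have := conj_zpowers hc
    exact .inr ⟨this, fun h' => not_conj (conjSub_trans (conjSub_symm h') this)⟩
end

section
/- Let a, b, c ∈ ℤ with a + b + c = 1, and suppose the three points P₁ = (a,b,c), P₂ = (b,c,a), P₃ = (c,a,b) in ℤ³ are pairwise distinct and the convex hull of {P₁,P₂,P₃} in ℝ³ contains no lattice points of ℤ³ other than P₁, P₂, P₃. Then {P₁,P₂,P₃} = {(1,0,0),(0,1,0),(0,0,1)}. -/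
theorem cyc_nonneg (a b c : ℤ) (h : a + b + c = 1) : 0 ≤ a ^ 2 - b * c := by
  obtain rfl : c = 1 - a - b := by omega
  rcases lt_trichotomy a 0 with ha | rfl | ha
  · nlinarith [sq_nonneg (b - (1 - a - b)), mul_nonneg (show 0 ≤ -1 - a by omega) (show 0 ≤ 1 - 3 * a by omega)]
  · rcases le_or_gt b 0 with hb | hb
    · nlinarith
    · nlinarith
  · nlinarith [sq_nonneg (b - (1 - a - b)), mul_nonneg (show 0 ≤ a + 1 by omega) (show 0 ≤ 3 * a - 1 by omega)]

/-- If the three pairwise distinct cyclic permutations `(a,b,c)`, `(b,c,a)`, `(c,a,b)` of a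
lattice point with `a + b + c = 1` span a triangle containing no other lattice points, then
they are the standard basis vectors `(1,0,0)`, `(0,1,0)`, `(0,0,1)`. -/
theorem cyclic_lattice_triangle_is_standard (a b c : ℤ) (habc : a + b + c = 1)
    (P₁ P₂ P₃ : Fin 3 → ℤ)
    (hP₁ : P₁ = ![a, b, c]) (hP₂ : P₂ = ![b, c, a]) (hP₃ : P₃ = ![c, a, b])
    (h12 : P₁ ≠ P₂) (h13 : P₁ ≠ P₃) (h23 : P₂ ≠ P₃)
    (hlat : ∀ x : Fin 3 → ℤ,
      latticeEmbed₃ x ∈ convexHull ℝ {latticeEmbed₃ P₁, latticeEmbed₃ P₂, latticeEmbed₃ P₃} →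
        x = P₁ ∨ x = P₂ ∨ x = P₃) :
    ({P₁, P₂, P₃} : Set (Fin 3 → ℤ)) = {![1,0,0], ![0,1,0], ![0,0,1]} := by
  have hN : 0 < a ^ 2 + b ^ 2 + c ^ 2 - a * b - b * c - c * a := by
    by_contra hcon
    have h1 : a - b = 0 := by
      apply pow_eq_zero_iff (two_ne_zero) |>.1
      nlinarith [sq_nonneg (a - b), sq_nonneg (b - c), sq_nonneg (c - a)]
    have h2 : b - c = 0 := by
      apply pow_eq_zero_iff (two_ne_zero) |>.1
      nlinarith [sq_nonneg (a - b), sq_nonneg (b - c), sq_nonneg (c - a)]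
    omega
  have ka : 0 ≤ a ^ 2 - b * c := cyc_nonneg a b c habc
  have kb : 0 ≤ b ^ 2 - c * a := cyc_nonneg b c a (by omega)
  have kc : 0 ≤ c ^ 2 - a * b := cyc_nonneg c a b (by omega)
  have hmem : latticeEmbed₃ ![1, 0, 0] ∈
      convexHull ℝ {latticeEmbed₃ P₁, latticeEmbed₃ P₂, latticeEmbed₃ P₃} := by
    have hNr : (0 : ℝ) < a ^ 2 + b ^ 2 + c ^ 2 - a * b - b * c - c * a := by exact_mod_cast hN
    have ra : (0 : ℝ) ≤ a ^ 2 - b * c := by exact_mod_cast ka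
    have rb : (0 : ℝ) ≤ b ^ 2 - c * a := by exact_mod_cast kb
    have rc : (0 : ℝ) ≤ c ^ 2 - a * b := by exact_mod_cast kc
    have hs : (a : ℝ) + b + c = 1 := by exact_mod_cast habc
    obtain ⟨N, hNd⟩ : ∃ N : ℝ, N = a ^ 2 + b ^ 2 + c ^ 2 - a * b - b * c - c * a := ⟨_, rfl⟩
    rw [← hNd] at hNr
    have key := (convex_convexHull ℝ
      {latticeEmbed₃ P₁, latticeEmbed₃ P₂, latticeEmbed₃ P₃}).sum_mem
      (t := (Finset.univ : Finset (Fin 3)))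
      (w := ![((a : ℝ) ^ 2 - b * c) / N, ((b : ℝ) ^ 2 - c * a) / N, ((c : ℝ) ^ 2 - a * b) / N])
      (z := ![latticeEmbed₃ P₁, latticeEmbed₃ P₂, latticeEmbed₃ P₃])
      (by
        intro i _
        fin_cases i
        · exact div_nonneg ra hNr.le
        · exact div_nonneg rb hNr.le
        · exact div_nonneg rc hNr.le)
      (by
        simp only [Fin.sum_univ_three, Matrix.cons_val]
        field_simp
        rw [hNd]; ring)
      (by
        intro i _
        apply subset_convexHull
        fin_cases i <;> simp)
    convert key using 1
    funext i
    have hc : (c : ℝ) = 1 - a - b := by linarith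
    subst hP₁ hP₂ hP₃
    fin_cases i <;>
      simp [Fin.sum_univ_three, latticeEmbed₃] <;> field_simp <;> rw [hNd, hc] <;> ring
  have hcase := hlat _ hmem
  rw [hP₁, hP₂, hP₃] at hcase
  have hv : (a = 1 ∧ b = 0 ∧ c = 0) ∨ (a = 0 ∧ b = 1 ∧ c = 0) ∨ (a = 0 ∧ b = 0 ∧ c = 1) := by
    rcases hcase with h | h | h
    all_goals
      have h0 := congrFun h 0
      have h1 := congrFun h 1
      have h2 := congrFun h 2
      simp at h0 h1 h2
      omega
  subst hP₁ hP₂ hP₃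
  rcases hv with ⟨rfl, rfl, rfl⟩ | ⟨rfl, rfl, rfl⟩ | ⟨rfl, rfl, rfl⟩ <;>
    ext x <;> simp only [Set.mem_insert_iff, Set.mem_singleton_iff] <;> tauto
end

section
/- Let S = {(1,1,0),(−1,−1,0),(1,0,1),(−1,0,−1),(0,1,1),(0,−1,−1)} ⊂ ℤ³. Then the origin lies in the interior of P := convexHull ℝ S, every point of S is an extreme point of P, and P ∩ ℤ³ = S ∪ {0}; i.e., S defines a terminal Fano polytope. -/
/-- The eight facet inequalities of the octahedron. -/
def facetIneqs (x y z : ℝ) : Prop :=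
  (x + y + z ≤ 2 ∧ -x - y - z ≤ 2) ∧ (3*x - y - z ≤ 2 ∧ -3*x + y + z ≤ 2) ∧
  (3*y - x - z ≤ 2 ∧ -3*y + x + z ≤ 2) ∧ (3*z - x - y ≤ 2 ∧ -3*z + x + y ≤ 2)

lemma combo_le {a b u w : ℝ} (ha : 0 ≤ a) (hb : 0 ≤ b) (hab : a + b = 1)
    (hu : u ≤ 2) (hw : w ≤ 2) : a * u + b * w ≤ 2 := by
  nlinarith [mul_le_mul_of_nonneg_left hu ha, mul_le_mul_of_nonneg_left hw hb]

lemma combo_eq {a b u w t : ℝ} (ha : 0 < a) (hb : 0 < b) (hab : a + b = 1)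
    (hu : u ≤ 2) (hw : w ≤ 2) (h : a * u + b * w = t) (ht : t = 2) : u = 2 ∧ w = 2 := by
  subst ht
  constructor
  · by_contra hne
    have : u < 2 := lt_of_le_of_ne hu hne
    nlinarith [mul_lt_mul_of_pos_left this ha, mul_le_mul_of_nonneg_left hw hb.le]
  · by_contra hne
    have : w < 2 := lt_of_le_of_ne hw hne
    nlinarith [mul_lt_mul_of_pos_left this hb, mul_le_mul_of_nonneg_left hu ha.le]

lemma facets_convex : Convex ℝ {v : Fin 3 → ℝ | facetIneqs (v 0) (v 1) (v 2)} := by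
  rintro u ⟨⟨h1, h2⟩, ⟨h3, h4⟩, ⟨h5, h6⟩, ⟨h7, h8⟩⟩ w
    ⟨⟨k1, k2⟩, ⟨k3, k4⟩, ⟨k5, k6⟩, ⟨k7, k8⟩⟩ a b ha hb hab
  have e1 := combo_le ha hb hab h1 k1
  have e2 := combo_le ha hb hab h2 k2
  have e3 := combo_le ha hb hab h3 k3
  have e4 := combo_le ha hb hab h4 k4
  have e5 := combo_le ha hb hab h5 k5
  have e6 := combo_le ha hb hab h6 k6
  have e7 := combo_le ha hb hab h7 k7
  have e8 := combo_le ha hb hab h8 k8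
  simp only [Set.mem_ofPred_eq, facetIneqs, Pi.add_apply, Pi.smul_apply, smul_eq_mul]
  refine ⟨⟨?_, ?_⟩, ⟨?_, ?_⟩, ⟨?_, ?_⟩, ⟨?_, ?_⟩⟩ <;> linarith

lemma hull_eq : convexHull ℝ (latticeEmbed₃ ''
    ({![1,1,0], ![-1,-1,0], ![1,0,1], ![-1,0,-1], ![0,1,1], ![0,-1,-1]} : Set (Fin 3 → ℤ))) =
    {v : Fin 3 → ℝ | facetIneqs (v 0) (v 1) (v 2)} := by
  apply Set.Subset.antisymm
  · apply convexHull_min _ facets_convex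
    rintro _ ⟨s, hs, rfl⟩
    simp only [Set.mem_insert_iff, Set.mem_singleton_iff] at hs
    rcases hs with rfl | rfl | rfl | rfl | rfl | rfl <;>
      simp [facetIneqs, latticeEmbed₃] <;> norm_num
  · rintro v hv
    obtain ⟨⟨h1, h2⟩, ⟨h3, h4⟩, ⟨h5, h6⟩, ⟨h7, h8⟩⟩ := hv
    obtain ⟨a, ha⟩ : ∃ a, a = (v 0 + v 1 - v 2) / 2 := ⟨_, rfl⟩
    obtain ⟨b, hb⟩ : ∃ b, b = (v 0 + v 2 - v 1) / 2 := ⟨_, rfl⟩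
    obtain ⟨c, hc⟩ : ∃ c, c = (v 1 + v 2 - v 0) / 2 := ⟨_, rfl⟩
    have hr : |a| + |b| + |c| ≤ 1 := by
      rcases abs_cases a with ⟨p, _⟩ | ⟨p, _⟩ <;> rcases abs_cases b with ⟨q, _⟩ | ⟨q, _⟩ <;>
        rcases abs_cases c with ⟨r, _⟩ | ⟨r, _⟩ <;> rw [p, q, r] <;> linarith
    obtain ⟨p, hp⟩ : ∃ p : Fin 6 → (Fin 3 → ℤ), p = ![![1,1,0], ![-1,-1,0], ![1,0,1],
      ![-1,0,-1], ![0,1,1], ![0,-1,-1]] := ⟨_, rfl⟩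
    obtain ⟨w, hw⟩ : ∃ w : Fin 6 → ℝ, w = ![(1 - |b| - |c| + a)/2, (1 - |b| - |c| - a)/2,
      (|b| + b)/2, (|b| - b)/2, (|c| + c)/2, (|c| - c)/2] := ⟨_, rfl⟩
    have key := (convex_convexHull ℝ (latticeEmbed₃ ''
      {![1,1,0], ![-1,-1,0], ![1,0,1], ![-1,0,-1], ![0,1,1], ![0,-1,-1]})).sum_mem
      (t := Finset.univ) (w := w) (z := fun i => latticeEmbed₃ (p i)) ?_ ?_ ?_
    · convert key using 1
      subst hw hp
      ext i
      fin_cases i <;> simp [Fin.sum_univ_succ, latticeEmbed₃] <;> linarith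
    · have := le_abs_self a
      have := neg_abs_le a
      have := le_abs_self b
      have := neg_abs_le b
      have := le_abs_self c
      have := neg_abs_le c
      intro i _
      subst hw
      fin_cases i <;> simp <;> linarith
    · subst hw
      simp [Fin.sum_univ_succ]
      ring
    · intro i _
      apply subset_convexHull
      refine ⟨p i, ?_, rfl⟩
      subst hp
      fin_cases i <;> simp

/-- The octahedron with vertices `±(1,1,0), ±(1,0,1), ±(0,1,1)` is a terminal Fano polytope (it corresponds to `(ℙ¹ × ℙ¹ × ℙ¹)/σ`). -/
theorem skew_octahedron_is_terminal_fano (S : Set (Fin 3 → ℤ))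
    (hS : S = {![1,1,0], ![-1,-1,0], ![1,0,1], ![-1,0,-1], ![0,1,1], ![0,-1,-1]})
    (P : Set (Fin 3 → ℝ)) (hP : P = convexHull ℝ (latticeEmbed₃ '' S)) :
    (0 : Fin 3 → ℝ) ∈ interior P ∧
    (∀ s ∈ S, latticeEmbed₃ s ∈ Set.extremePoints ℝ P) ∧
    (∀ x : Fin 3 → ℤ, latticeEmbed₃ x ∈ P ↔ x ∈ S ∨ x = 0) := by
  subst hS
  rw [hull_eq] at hP
  subst hP
  refine ⟨?_, ?_, ?_⟩
  · rw [mem_interior_iff_mem_nhds, Metric.mem_nhds_iff]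
    refine ⟨1/5, by norm_num, ?_⟩
    intro v hv
    rw [mem_ball_zero_iff, pi_norm_lt_iff (by norm_num)] at hv
    have h0 := abs_lt.1 (hv 0)
    have h1 := abs_lt.1 (hv 1)
    have h2 := abs_lt.1 (hv 2)
    refine ⟨⟨?_, ?_⟩, ⟨?_, ?_⟩, ⟨?_, ?_⟩, ⟨?_, ?_⟩⟩ <;> linarith
  · intro s hs
    rw [mem_extremePoints]
    refine ⟨?_, ?_⟩
    · rw [← hull_eq]
      exact subset_convexHull _ _ ⟨s, hs, rfl⟩
    · rintro u ⟨⟨h1, h2⟩, ⟨h3, h4⟩, ⟨h5, h6⟩, ⟨h7, h8⟩⟩ w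
        ⟨⟨k1, k2⟩, ⟨k3, k4⟩, ⟨k5, k6⟩, ⟨k7, k8⟩⟩ ⟨a, b, ha, hb, hab, he⟩
      have e0 := congrFun he 0
      have e1 := congrFun he 1
      have e2 := congrFun he 2
      have f1 := combo_eq ha hb hab h1 k1 rfl
      have f2 := combo_eq ha hb hab h2 k2 rfl
      have f3 := combo_eq ha hb hab h3 k3 rfl
      have f4 := combo_eq ha hb hab h4 k4 rfl
      have f5 := combo_eq ha hb hab h5 k5 rfl
      have f6 := combo_eq ha hb hab h6 k6 rfl
      have f7 := combo_eq ha hb hab h7 k7 rfl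
      have f8 := combo_eq ha hb hab h8 k8 rfl
      simp only [Set.mem_insert_iff, Set.mem_singleton_iff] at hs
      have fin : ∀ x y z : ℝ, latticeEmbed₃ s = ![x, y, z] →
          (u 0 = x ∧ u 1 = y ∧ u 2 = z) ∧ (w 0 = x ∧ w 1 = y ∧ w 2 = z) →
          u = latticeEmbed₃ s ∧ w = latticeEmbed₃ s := by
        rintro x y z h ⟨⟨a1, a2, a3⟩, b1, b2, b3⟩
        rw [h]
        constructor <;> ext i <;> fin_cases i <;> simp [*]
      rcases hs with rfl | rfl | rfl | rfl | rfl | rfl <;>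
        simp [latticeEmbed₃] at e0 e1 e2
      · have g1 := f1 (by linarith)
        have g2 := f3 (by linarith)
        have g3 := f5 (by linarith)
        refine fin 1 1 0 (by ext i; fin_cases i <;> simp [latticeEmbed₃]) ?_
        refine ⟨⟨?_, ?_, ?_⟩, ?_, ?_, ?_⟩ <;> linarith
      · have g1 := f2 (by linarith)
        have g2 := f4 (by linarith)
        have g3 := f6 (by linarith)
        refine fin (-1) (-1) 0 (by ext i; fin_cases i <;> simp [latticeEmbed₃]) ?_
        refine ⟨⟨?_, ?_, ?_⟩, ?_, ?_, ?_⟩ <;> linarith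
      · have g1 := f1 (by linarith)
        have g2 := f3 (by linarith)
        have g3 := f7 (by linarith)
        refine fin 1 0 1 (by ext i; fin_cases i <;> simp [latticeEmbed₃]) ?_
        refine ⟨⟨?_, ?_, ?_⟩, ?_, ?_, ?_⟩ <;> linarith
      · have g1 := f2 (by linarith)
        have g2 := f4 (by linarith)
        have g3 := f8 (by linarith)
        refine fin (-1) 0 (-1) (by ext i; fin_cases i <;> simp [latticeEmbed₃]) ?_
        refine ⟨⟨?_, ?_, ?_⟩, ?_, ?_, ?_⟩ <;> linarith
      · have g1 := f1 (by linarith)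
        have g2 := f5 (by linarith)
        have g3 := f7 (by linarith)
        refine fin 0 1 1 (by ext i; fin_cases i <;> simp [latticeEmbed₃]) ?_
        refine ⟨⟨?_, ?_, ?_⟩, ?_, ?_, ?_⟩ <;> linarith
      · have g1 := f2 (by linarith)
        have g2 := f6 (by linarith)
        have g3 := f8 (by linarith)
        refine fin 0 (-1) (-1) (by ext i; fin_cases i <;> simp [latticeEmbed₃]) ?_
        refine ⟨⟨?_, ?_, ?_⟩, ?_, ?_, ?_⟩ <;> linarith
  · intro x
    constructor
    · rintro ⟨⟨h1, h2⟩, ⟨h3, h4⟩, ⟨h5, h6⟩, ⟨h7, h8⟩⟩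
      simp only [latticeEmbed₃] at h1 h2 h3 h4 h5 h6 h7 h8
      norm_cast at h1 h2 h3 h4 h5 h6 h7 h8
      have hx : x = ![x 0, x 1, x 2] := by ext i; fin_cases i <;> rfl
      generalize x 0 = p at *
      generalize x 1 = q at *
      generalize x 2 = r at *
      subst hx
      have a1 : p ≤ 1 := by omega
      have a2 : -1 ≤ p := by omega
      have b1 : q ≤ 1 := by omega
      have b2 : -1 ≤ q := by omega
      have c1 : r ≤ 1 := by omega
      have c2 : -1 ≤ r := by omega
      interval_cases p <;> interval_cases q <;> interval_cases r <;>
        first | omega | simp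
    · rintro (h | rfl)
      · rw [← hull_eq]
        exact subset_convexHull _ _ ⟨x, h, rfl⟩
      · norm_num [facetIneqs, latticeEmbed₃]
end

section
/- Let S = {(1,0,0),(−1,0,0),(0,0,1),(0,0,−1),(1,1,1),(−1,−1,−1),(0,1,0),(0,−1,0)} ⊂ ℤ³ (a combinatorial cube). Then the origin lies in the interior of P := convexHull ℝ S, every point of S is an extreme point of P, and P ∩ ℤ³ = S ∪ {0}; i.e., S defines a terminal Fano polytope. -/
/-- The three facet functionals, bounded by one in absolute value. -/
def cubeBox : Set (Fin 3 → ℝ) :=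
  {x | (-1 ≤ x 0 + x 1 - x 2 ∧ x 0 + x 1 - x 2 ≤ 1) ∧
       (-1 ≤ x 0 - x 1 + x 2 ∧ x 0 - x 1 + x 2 ≤ 1) ∧
       (-1 ≤ -x 0 + x 1 + x 2 ∧ -x 0 + x 1 + x 2 ≤ 1)}

theorem cubeBox_convex : Convex ℝ cubeBox := by
  intro x hx y hy a b ha hb hab
  obtain ⟨⟨h1, h2⟩, ⟨h3, h4⟩, ⟨h5, h6⟩⟩ := hx
  obtain ⟨⟨k1, k2⟩, ⟨k3, k4⟩, ⟨k5, k6⟩⟩ := hy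
  simp only [cubeBox, Set.mem_ofPred_eq, Pi.add_apply, Pi.smul_apply, smul_eq_mul]
  refine ⟨⟨?_, ?_⟩, ⟨?_, ?_⟩, ⟨?_, ?_⟩⟩ <;> nlinarith

/-- The parametrisation of the box by the values of the facet functionals. -/
noncomputable def cubePar (u v w : ℝ) : Fin 3 → ℝ := ![(u + v) / 2, (u + w) / 2, (v + w) / 2]

theorem cubeBox_subset {P : Set (Fin 3 → ℝ)} (hc : Convex ℝ P)
    (h : ∀ u v w : ℝ, (u = 1 ∨ u = -1) → (v = 1 ∨ v = -1) → (w = 1 ∨ w = -1) →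
      cubePar u v w ∈ P) : cubeBox ⊆ P := by
  have h1 : ∀ u v w : ℝ, (-1 ≤ u ∧ u ≤ 1) → (v = 1 ∨ v = -1) → (w = 1 ∨ w = -1) →
      cubePar u v w ∈ P := by
    intro u v w hu hv hw
    have := hc (h 1 v w (Or.inl rfl) hv hw) (h (-1) v w (Or.inr rfl) hv hw)
      (show 0 ≤ (1 + u) / 2 by linarith) (show 0 ≤ (1 - u) / 2 by linarith) (by ring)
    convert this using 1
    ext i; fin_cases i <;> simp [cubePar] <;> ring
  have h2 : ∀ u v w : ℝ, (-1 ≤ u ∧ u ≤ 1) → (-1 ≤ v ∧ v ≤ 1) → (w = 1 ∨ w = -1) →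
      cubePar u v w ∈ P := by
    intro u v w hu hv hw
    have := hc (h1 u 1 w hu (Or.inl rfl) hw) (h1 u (-1) w hu (Or.inr rfl) hw)
      (show 0 ≤ (1 + v) / 2 by linarith) (show 0 ≤ (1 - v) / 2 by linarith) (by ring)
    convert this using 1
    ext i; fin_cases i <;> simp [cubePar] <;> ring
  intro x hx
  obtain ⟨hu, hv, hw⟩ := hx
  have := hc (h2 _ _ 1 hu hv (Or.inl rfl)) (h2 _ _ (-1) hu hv (Or.inr rfl))
      (show 0 ≤ (1 + (-x 0 + x 1 + x 2)) / 2 by linarith)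
      (show 0 ≤ (1 - (-x 0 + x 1 + x 2)) / 2 by linarith) (by ring)
  convert this using 1
  ext i; fin_cases i <;> simp [cubePar] <;> ring

theorem cube_eq_one {a b p q : ℝ} (ha : 0 < a) (hb : 0 < b) (hab : a + b = 1) (hp : p ≤ 1)
    (hq : q ≤ 1) (h : a * p + b * q = 1) : p = 1 := by
  apply le_antisymm hp
  nlinarith

theorem cubeBox_extreme (s : Fin 3 → ℝ) (hs : s ∈ cubeBox)
    (h1 : s 0 + s 1 - s 2 = 1 ∨ s 0 + s 1 - s 2 = -1)
    (h2 : s 0 - s 1 + s 2 = 1 ∨ s 0 - s 1 + s 2 = -1)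
    (h3 : -s 0 + s 1 + s 2 = 1 ∨ -s 0 + s 1 + s 2 = -1) :
    s ∈ Set.extremePoints ℝ cubeBox := by
  refine ⟨hs, ?_⟩
  rintro x ⟨⟨x1, x2⟩, ⟨x3, x4⟩, ⟨x5, x6⟩⟩ y ⟨⟨y1, y2⟩, ⟨y3, y4⟩, ⟨y5, y6⟩⟩ ⟨a, b, ha, hb, hab, rfl⟩
  simp only [Pi.add_apply, Pi.smul_apply, smul_eq_mul] at h1 h2 h3
  have key : ∀ p q : ℝ, -1 ≤ p → p ≤ 1 → -1 ≤ q → q ≤ 1 →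
      (a * p + b * q = 1 ∨ a * p + b * q = -1) → p = a * p + b * q := by
    rintro p q p1 p2 q1 q2 (h | h)
    · rw [h]; exact cube_eq_one ha hb hab p2 q2 h
    · have := cube_eq_one (p := -p) (q := -q) ha hb hab (by linarith) (by linarith) (by linarith)
      linarith
  have e1 := key _ _ x1 x2 y1 y2 (by convert h1 using 2 <;> ring)
  have e2 := key _ _ x3 x4 y3 y4 (by convert h2 using 2 <;> ring)
  have e3 := key _ _ x5 x6 y5 y6 (by convert h3 using 2 <;> ring)
  ext i
  fin_cases i <;> simp <;> linarith

/-- The combinatorial cube with the given eight vertices is a terminal Fano polytope (it corresponds to the intersection of two quadrics in `ℙ⁵`). -/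
theorem cube_is_terminal_fano (S : Set (Fin 3 → ℤ))
    (hS : S = {![1,0,0], ![-1,0,0], ![0,0,1], ![0,0,-1], ![1,1,1], ![-1,-1,-1], ![0,1,0], ![0,-1,0]})
    (P : Set (Fin 3 → ℝ)) (hP : P = convexHull ℝ (latticeEmbed₃ '' S)) :
    (0 : Fin 3 → ℝ) ∈ interior P ∧
    (∀ s ∈ S, latticeEmbed₃ s ∈ Set.extremePoints ℝ P) ∧
    (∀ x : Fin 3 → ℤ, latticeEmbed₃ x ∈ P ↔ x ∈ S ∨ x = 0) := by
  have hPB : P = cubeBox := by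
    apply Set.Subset.antisymm
    · rw [hP]
      refine convexHull_min ?_ cubeBox_convex
      rintro _ ⟨s, hs, rfl⟩
      rw [hS] at hs
      simp only [Set.mem_insert_iff, Set.mem_singleton_iff] at hs
      rcases hs with rfl | rfl | rfl | rfl | rfl | rfl | rfl | rfl <;>
        simp [cubeBox, latticeEmbed₃] <;> norm_num
    · have hc : Convex ℝ P := hP ▸ convex_convexHull ℝ _
      have hm : ∀ s ∈ S, latticeEmbed₃ s ∈ P := fun s hs => by
        rw [hP]; exact subset_convexHull ℝ _ ⟨s, hs, rfl⟩
      apply cubeBox_subset hc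
      have aux : ∀ s ∈ S, ∀ y : Fin 3 → ℝ, y 0 = s 0 → y 1 = s 1 → y 2 = s 2 → y ∈ P := by
        intro s hs y h0 h1 h2
        convert hm s hs using 1
        ext i; fin_cases i <;> simp [latticeEmbed₃, h0, h1, h2]
      rintro u v w (rfl | rfl) (rfl | rfl) (rfl | rfl)
      · apply aux ![1,1,1] (by simp [hS]) <;> simp [cubePar]
      · apply aux ![1,0,0] (by simp [hS]) <;> simp [cubePar]
      · apply aux ![0,1,0] (by simp [hS]) <;> simp [cubePar]
      · apply aux ![0,0,-1] (by simp [hS]) <;> simp [cubePar] <;> norm_num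
      · apply aux ![0,0,1] (by simp [hS]) <;> simp [cubePar]
      · apply aux ![0,-1,0] (by simp [hS]) <;> simp [cubePar] <;> norm_num
      · apply aux ![-1,0,0] (by simp [hS]) <;> simp [cubePar] <;> norm_num
      · apply aux ![-1,-1,-1] (by simp [hS]) <;> simp [cubePar] <;> norm_num
  rw [hPB]
  refine ⟨?_, ?_, ?_⟩
  · rw [mem_interior_iff_mem_nhds, Metric.mem_nhds_iff]
    refine ⟨1 / 3, by norm_num, ?_⟩
    intro x hx
    rw [mem_ball_zero_iff, pi_norm_lt_iff (by norm_num)] at hx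
    have h0 := abs_lt.1 (hx 0)
    have h1 := abs_lt.1 (hx 1)
    have h2 := abs_lt.1 (hx 2)
    refine ⟨⟨?_, ?_⟩, ⟨?_, ?_⟩, ⟨?_, ?_⟩⟩ <;> linarith
  · intro s hs
    have hsB : latticeEmbed₃ s ∈ cubeBox := by
      rw [← hPB, hP]; exact subset_convexHull ℝ _ ⟨s, hs, rfl⟩
    rw [hS] at hs
    simp only [Set.mem_insert_iff, Set.mem_singleton_iff] at hs
    apply cubeBox_extreme _ hsB <;>
    rcases hs with rfl | rfl | rfl | rfl | rfl | rfl | rfl | rfl <;>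
      simp [latticeEmbed₃]
  · intro x
    constructor
    · rintro ⟨⟨h1, h2⟩, ⟨h3, h4⟩, ⟨h5, h6⟩⟩
      simp only [latticeEmbed₃] at h1 h2 h3 h4 h5 h6
      norm_cast at h1 h2 h3 h4 h5 h6
      have hx : x = ![x 0, x 1, x 2] := by ext i; fin_cases i <;> rfl
      generalize x 0 = a at *
      generalize x 1 = b at *
      generalize x 2 = c at *
      subst hx
      have a1 : -1 ≤ a := by omega
      have a2 : a ≤ 1 := by omega
      have b1 : -1 ≤ b := by omega
      have b2 : b ≤ 1 := by omega
      have c1 : -1 ≤ c := by omega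
      have c2 : c ≤ 1 := by omega
      rw [hS]
      interval_cases a <;> interval_cases b <;> interval_cases c <;> first | omega | simp
    · rintro (h | rfl)
      · rw [← hPB, hP]; exact subset_convexHull ℝ _ ⟨x, h, rfl⟩
      · simp [cubeBox, latticeEmbed₃]
end

section
/- Let S = {(1,0,0),(0,1,0),(1,1,1),(−1,−1,0),(0,0,−1)} ⊂ ℤ³ (a pyramid over a quadrangle). Then the origin lies in the interior of P := convexHull ℝ S, every point of S is an extreme point of P, and P ∩ ℤ³ = S ∪ {0}; i.e., S defines a terminal Fano polytope. -/
/-- The five facet inequalities of the pyramid. -/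
def pyrIneq (p : Fin 3 → ℝ) : Prop :=
  p 0 + p 1 - p 2 ≤ 1 ∧ p 0 - 2 * p 1 + 2 * p 2 ≤ 1 ∧ -2 * p 0 + p 1 + 2 * p 2 ≤ 1 ∧
    -2 * p 0 + p 1 - p 2 ≤ 1 ∧ p 0 - 2 * p 1 - p 2 ≤ 1

/-- A convex combination of numbers at most one attains one only if each does. -/
theorem pyr_tight {p q m n : ℝ} (hp : 0 < p) (hq : 0 < q) (hpq : p + q = 1)
    (hm : m ≤ 1) (hn : n ≤ 1) (h : p * m + q * n = 1) : m = 1 := by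
  have h2 : 0 ≤ q * (1 - n) := mul_nonneg hq.le (by linarith)
  have h3 : p * (1 - m) ≤ 0 := by nlinarith
  by_contra hne
  have : 0 < p * (1 - m) := mul_pos hp (by
    rcases lt_or_eq_of_le hm with h | h
    · linarith
    · exact absurd h hne)
  linarith

theorem pyr_comb {Q : Set (Fin 3 → ℝ)} (hQ : Convex ℝ Q) {a b c d : Fin 3 → ℝ}
    (ha : a ∈ Q) (hb : b ∈ Q) (hc : c ∈ Q) (hd : d ∈ Q) {α β γ δ : ℝ}
    (h1 : 0 ≤ α) (h2 : 0 ≤ β) (h3 : 0 ≤ γ) (h4 : 0 ≤ δ) (h : α + β + γ + δ = 1) :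
    α • a + β • b + γ • c + δ • d ∈ Q := by
  have := hQ.sum_mem (t := Finset.univ) (w := ![α, β, γ, δ]) (z := ![a, b, c, d])
    (by intro i _; fin_cases i <;> simpa)
    (by simpa [Fin.sum_univ_four] using h)
    (by intro i _; fin_cases i <;> simpa)
  simpa [Fin.sum_univ_four] using this

theorem pyr_hull : convexHull ℝ (latticeEmbed₃ '' ({![1,0,0], ![0,1,0], ![1,1,1], ![-1,-1,0],
    ![0,0,-1]} : Set (Fin 3 → ℤ))) = {p | pyrIneq p} := by
  apply Set.Subset.antisymm
  · apply convexHull_min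
    · rintro _ ⟨s, hs, rfl⟩
      simp only [Set.mem_insert_iff, Set.mem_singleton_iff] at hs
      rcases hs with rfl | rfl | rfl | rfl | rfl <;>
        simp [pyrIneq, latticeEmbed₃] <;> norm_num
    · intro u hu v hv p q hp hq hpq
      obtain ⟨a1, a2, a3, a4, a5⟩ := hu
      obtain ⟨b1, b2, b3, b4, b5⟩ := hv
      have hq' : q = 1 - p := by linarith
      subst hq'
      simp only [Set.mem_ofPred_eq, pyrIneq, Pi.add_apply, Pi.smul_apply, smul_eq_mul]
      refine ⟨?_, ?_, ?_, ?_, ?_⟩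
      · nlinarith [mul_le_mul_of_nonneg_left a1 hp, mul_le_mul_of_nonneg_left b1 hq]
      · nlinarith [mul_le_mul_of_nonneg_left a2 hp, mul_le_mul_of_nonneg_left b2 hq]
      · nlinarith [mul_le_mul_of_nonneg_left a3 hp, mul_le_mul_of_nonneg_left b3 hq]
      · nlinarith [mul_le_mul_of_nonneg_left a4 hp, mul_le_mul_of_nonneg_left b4 hq]
      · nlinarith [mul_le_mul_of_nonneg_left a5 hp, mul_le_mul_of_nonneg_left b5 hq]
  · rintro p ⟨h1, h2, h3, h4, h5⟩
    set T : Set (Fin 3 → ℤ) := {![1,0,0], ![0,1,0], ![1,1,1], ![-1,-1,0], ![0,0,-1]} with hT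
    have hQ := convex_convexHull ℝ (latticeEmbed₃ '' T)
    have hm : ∀ s ∈ T, latticeEmbed₃ s ∈ convexHull ℝ (latticeEmbed₃ '' T) :=
      fun s hs => subset_convexHull ℝ _ ⟨s, hs, rfl⟩
    have ha := hm ![1,0,0] (by simp [hT])
    have hb := hm ![0,1,0] (by simp [hT])
    have hc := hm ![1,1,1] (by simp [hT])
    have hd := hm ![-1,-1,0] (by simp [hT])
    have he := hm ![0,0,-1] (by simp [hT])
    rcases le_total 0 (p 2) with hz | hz
    · have := pyr_comb hQ ha hb hc hd (α := (1 + 2 * p 0 - p 1 - 2 * p 2) / 3)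
        (β := (1 + 2 * p 1 - p 0 - 2 * p 2) / 3) (γ := p 2) (δ := (1 - p 0 - p 1 + p 2) / 3)
        (by linarith) (by linarith) hz (by linarith) (by ring)
      convert this using 1
      ext i
      fin_cases i <;> simp [latticeEmbed₃] <;> ring
    · have := pyr_comb hQ ha hb he hd (α := (1 + 2 * p 0 - p 1 + p 2) / 3)
        (β := (1 + 2 * p 1 - p 0 + p 2) / 3) (γ := -p 2) (δ := (1 - p 0 - p 1 + p 2) / 3)
        (by linarith) (by linarith) (by linarith) (by linarith) (by ring)
      convert this using 1
      ext i
      fin_cases i <;> simp [latticeEmbed₃] <;> ring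

/-- The pyramid over a quadrangle with the given five vertices is a terminal Fano polytope (it corresponds to a quadratic cone `Q ⊂ ℙ⁴`). -/
theorem pyramid_is_terminal_fano (S : Set (Fin 3 → ℤ))
    (hS : S = {![1,0,0], ![0,1,0], ![1,1,1], ![-1,-1,0], ![0,0,-1]})
    (P : Set (Fin 3 → ℝ)) (hP : P = convexHull ℝ (latticeEmbed₃ '' S)) :
    (0 : Fin 3 → ℝ) ∈ interior P ∧
    (∀ s ∈ S, latticeEmbed₃ s ∈ Set.extremePoints ℝ P) ∧
    (∀ x : Fin 3 → ℤ, latticeEmbed₃ x ∈ P ↔ x ∈ S ∨ x = 0) := by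
  have hPI : P = {p | pyrIneq p} := by rw [hP, hS, pyr_hull]
  have hmem : ∀ s ∈ S, latticeEmbed₃ s ∈ P := fun s hs => by
    rw [hP]; exact subset_convexHull ℝ _ ⟨s, hs, rfl⟩
  refine ⟨?_, ?_, ?_⟩
  · rw [mem_interior]
    refine ⟨{p | p 0 + p 1 - p 2 < 1} ∩ ({p | p 0 - 2 * p 1 + 2 * p 2 < 1} ∩
      ({p | -2 * p 0 + p 1 + 2 * p 2 < 1} ∩ ({p | -2 * p 0 + p 1 - p 2 < 1} ∩
      {p | p 0 - 2 * p 1 - p 2 < 1}))), ?_, ?_, ?_⟩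
    · rintro p ⟨h1, h2, h3, h4, h5⟩
      rw [hPI]
      exact ⟨le_of_lt h1, le_of_lt h2, le_of_lt h3, le_of_lt h4, le_of_lt h5⟩
    · refine IsOpen.inter ?_ (IsOpen.inter ?_ (IsOpen.inter ?_ (IsOpen.inter ?_ ?_))) <;>
        exact isOpen_lt (by fun_prop) (by fun_prop)
    · simp
  · intro s hs
    rw [mem_extremePoints_iff_left]
    refine ⟨hmem s hs, ?_⟩
    rintro u hu v hv ⟨p, q, hp, hq, hpq, h⟩
    rw [hPI] at hu hv
    obtain ⟨a1, a2, a3, a4, a5⟩ := hu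
    obtain ⟨b1, b2, b3, b4, b5⟩ := hv
    have e0 := congrFun h 0
    have e1 := congrFun h 1
    have e2 := congrFun h 2
    have t1 := pyr_tight hp hq hpq a1 b1
    have t2 := pyr_tight hp hq hpq a2 b2
    have t3 := pyr_tight hp hq hpq a3 b3
    have t4 := pyr_tight hp hq hpq a4 b4
    have t5 := pyr_tight hp hq hpq a5 b5
    rw [hS] at hs
    simp only [Set.mem_insert_iff, Set.mem_singleton_iff] at hs
    rcases hs with rfl | rfl | rfl | rfl | rfl <;>
      simp [latticeEmbed₃] at e0 e1 e2
    · have := t1 (by linarith)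
      have := t2 (by linarith)
      have := t5 (by linarith)
      ext i; fin_cases i <;> simp [latticeEmbed₃] <;> linarith
    · have := t1 (by linarith)
      have := t3 (by linarith)
      have := t4 (by linarith)
      ext i; fin_cases i <;> simp [latticeEmbed₃] <;> linarith
    · have := t1 (by linarith)
      have := t2 (by linarith)
      have := t3 (by linarith)
      ext i; fin_cases i <;> simp [latticeEmbed₃] <;> linarith
    · have := t2 (by linarith)
      have := t3 (by linarith)
      have := t4 (by linarith)
      ext i; fin_cases i <;> simp [latticeEmbed₃] <;> linarith
    · have := t1 (by linarith)
      have := t4 (by linarith)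
      have := t5 (by linarith)
      ext i; fin_cases i <;> simp [latticeEmbed₃] <;> linarith
  · intro x
    constructor
    · intro hx
      rw [hPI] at hx
      obtain ⟨h1, h2, h3, h4, h5⟩ := hx
      simp only [latticeEmbed₃] at h1 h2 h3 h4 h5
      norm_cast at h1 h2 h3 h4 h5
      have key : (x 0 = 1 ∧ x 1 = 0 ∧ x 2 = 0) ∨ (x 0 = 0 ∧ x 1 = 1 ∧ x 2 = 0) ∨
          (x 0 = 1 ∧ x 1 = 1 ∧ x 2 = 1) ∨ (x 0 = -1 ∧ x 1 = -1 ∧ x 2 = 0) ∨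
          (x 0 = 0 ∧ x 1 = 0 ∧ x 2 = -1) ∨ (x 0 = 0 ∧ x 1 = 0 ∧ x 2 = 0) := by
        have : x 2 = -1 ∨ x 2 = 0 ∨ x 2 = 1 := by omega
        have : x 0 = -1 ∨ x 0 = 0 ∨ x 0 = 1 := by omega
        omega
      have hx3 : x = ![x 0, x 1, x 2] := by ext i; fin_cases i <;> rfl
      rw [hS]
      simp only [Set.mem_insert_iff, Set.mem_singleton_iff]
      rcases key with ⟨k0, k1, k2⟩ | ⟨k0, k1, k2⟩ | ⟨k0, k1, k2⟩ | ⟨k0, k1, k2⟩ |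
        ⟨k0, k1, k2⟩ | ⟨k0, k1, k2⟩ <;> rw [k0, k1, k2] at hx3 <;> subst hx3 <;> simp
    · rintro (hx | rfl)
      · exact hmem x hx
      · rw [hPI]
        norm_num [pyrIneq, latticeEmbed₃]
end

section
/- Let S = {(−1,−1,0),(1,0,0),(1,1,1),(−2,−1,−1),(0,0,−1),(0,1,0)} ⊂ ℤ³ (a triangular prism). Then the origin lies in the interior of P := convexHull ℝ S, every point of S is an extreme point of P, and P ∩ ℤ³ = S ∪ {0}; i.e., S defines a terminal Fano polytope. -/
/-- Facet description of the prism. -/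
def prismH : Set (Fin 3 → ℝ) :=
  {p | p 0 + p 1 - p 2 ≤ 1 ∧ p 0 - 2 * p 1 + 2 * p 2 ≤ 1 ∧ p 0 - 2 * p 1 - p 2 ≤ 1 ∧
    -2 * p 0 + p 1 + 2 * p 2 ≤ 1 ∧ -p 0 + 2 * p 1 - 2 * p 2 ≤ 2}

theorem prismH_convex : Convex ℝ prismH := by
  rintro p ⟨h1, h2, h3, h4, h5⟩ q ⟨k1, k2, k3, k4, k5⟩ a b ha hb hab
  simp only [prismH, Set.mem_ofPred_eq, Pi.add_apply, Pi.smul_apply, smul_eq_mul]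
  obtain rfl : b = 1 - a := by linarith
  refine ⟨?_, ?_, ?_, ?_, ?_⟩ <;> nlinarith

theorem prism_hull_eq (S : Set (Fin 3 → ℤ))
    (hS : S = {![-1,-1,0], ![1,0,0], ![1,1,1], ![-2,-1,-1], ![0,0,-1], ![0,1,0]}) :
    convexHull ℝ (latticeEmbed₃ '' S) = prismH := by
  apply Set.Subset.antisymm
  · apply convexHull_min _ prismH_convex
    rintro _ ⟨s, hs, rfl⟩
    rw [hS] at hs
    simp only [Set.mem_insert_iff, Set.mem_singleton_iff] at hs
    rcases hs with rfl | rfl | rfl | rfl | rfl | rfl <;>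
      simp [prismH, latticeEmbed₃] <;> norm_num
  · rintro p ⟨h1, h2, h3, h4, h5⟩
    have hc := convex_convexHull ℝ (latticeEmbed₃ '' S)
    have hm : ∀ s ∈ S, latticeEmbed₃ s ∈ convexHull ℝ (latticeEmbed₃ '' S) :=
      fun s hs => subset_convexHull _ _ ⟨s, hs, rfl⟩
    let v : Fin 6 → (Fin 3 → ℤ) :=
      ![![-1,-1,0], ![1,0,0], ![1,1,1], ![-2,-1,-1], ![0,0,-1], ![0,1,0]]
    let t : ℝ := (1 - (p 0 - 2 * p 1 + 2 * p 2)) / 3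
    let l0 : ℝ := (1 - (p 0 + p 1 - p 2)) / 3
    let l1 : ℝ := (1 - (-2 * p 0 + p 1 + 2 * p 2)) / 3
    let l2 : ℝ := (1 - (p 0 - 2 * p 1 - p 2)) / 3
    have ht : 0 ≤ t := by simp only [t]; linarith
    have ht' : 0 ≤ 1 - t := by simp only [t]; linarith
    have hl0 : 0 ≤ l0 := by simp only [l0]; linarith
    have hl1 : 0 ≤ l1 := by simp only [l1]; linarith
    have hl2 : 0 ≤ l2 := by simp only [l2]; linarith
    let w : Fin 6 → ℝ := ![l0 * (1 - t), l1 * (1 - t), l2 * (1 - t), l0 * t, l1 * t, l2 * t]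
    have key := hc.sum_mem (t := Finset.univ) (w := w) (z := fun i => latticeEmbed₃ (v i))
      (by
        intro i _
        fin_cases i <;> simp [w] <;> positivity)
      (by
        simp [Fin.sum_univ_succ, w, l0, l1, l2]
        ring)
      (by
        intro i _
        apply hm
        rw [hS]
        fin_cases i <;> simp [v])
    convert key using 1
    ext i
    fin_cases i <;> simp [Fin.sum_univ_succ, w, v, latticeEmbed₃, l0, l1, l2, t] <;> ring

theorem tight_aux {a b u v c : ℝ} (ha : 0 < a) (hb : 0 < b) (hab : a + b = 1)
    (hu : u ≤ c) (hv : v ≤ c) (h : a * u + b * v = c) : u = c := by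
  obtain rfl : b = 1 - a := by linarith
  nlinarith

/-- The triangular prism with the given six vertices is a terminal Fano polytope (it corresponds to the toric Fano threefold of degree `81/2` and genus `21`). -/
theorem prism_is_terminal_fano (S : Set (Fin 3 → ℤ))
    (hS : S = {![-1,-1,0], ![1,0,0], ![1,1,1], ![-2,-1,-1], ![0,0,-1], ![0,1,0]})
    (P : Set (Fin 3 → ℝ)) (hP : P = convexHull ℝ (latticeEmbed₃ '' S)) :
    (0 : Fin 3 → ℝ) ∈ interior P ∧
    (∀ s ∈ S, latticeEmbed₃ s ∈ Set.extremePoints ℝ P) ∧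
    (∀ x : Fin 3 → ℤ, latticeEmbed₃ x ∈ P ↔ x ∈ S ∨ x = 0) := by
  have hH : P = prismH := hP.trans (prism_hull_eq S hS)
  have hSP : ∀ s ∈ S, latticeEmbed₃ s ∈ P := fun s hs => by
    rw [hP]; exact subset_convexHull _ _ ⟨s, hs, rfl⟩
  refine ⟨?_, ?_, ?_⟩
  · rw [mem_interior]
    refine ⟨{p | p 0 + p 1 - p 2 < 1 ∧ p 0 - 2 * p 1 + 2 * p 2 < 1 ∧ p 0 - 2 * p 1 - p 2 < 1 ∧
      -2 * p 0 + p 1 + 2 * p 2 < 1 ∧ -p 0 + 2 * p 1 - 2 * p 2 < 2}, ?_, ?_, ?_⟩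
    · rintro p ⟨h1, h2, h3, h4, h5⟩
      rw [hH]
      exact ⟨h1.le, h2.le, h3.le, h4.le, h5.le⟩
    · refine IsOpen.and ?_ (IsOpen.and ?_ (IsOpen.and ?_ (IsOpen.and ?_ ?_))) <;>
        exact isOpen_lt (by fun_prop) (by fun_prop)
    · norm_num
  · intro s hs
    refine ⟨hSP s hs, ?_⟩
    rw [hH]
    rintro p ⟨h1, h2, h3, h4, h5⟩ q ⟨k1, k2, k3, k4, k5⟩ ⟨a, b, ha, hb, hab, e⟩
    have e0 := congrFun e 0
    have e1 := congrFun e 1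
    have e2 := congrFun e 2
    have t1 := tight_aux ha hb hab h1 k1
    have t2 := tight_aux ha hb hab h2 k2
    have t3 := tight_aux ha hb hab h3 k3
    have t4 := tight_aux ha hb hab h4 k4
    have t5 := tight_aux ha hb hab h5 k5
    clear h1 h2 h3 h4 h5 k1 k2 k3 k4 k5 e
    rw [hS] at hs
    simp only [Set.mem_insert_iff, Set.mem_singleton_iff] at hs
    rcases hs with rfl | rfl | rfl | rfl | rfl | rfl <;>
      simp [latticeEmbed₃] at e0 e1 e2 <;>
      (try replace t1 := t1 (by linarith)) <;>
      (try replace t2 := t2 (by linarith)) <;>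
      (try replace t3 := t3 (by linarith)) <;>
      (try replace t4 := t4 (by linarith)) <;>
      (try replace t5 := t5 (by linarith)) <;>
      (ext i; fin_cases i <;> simp [latticeEmbed₃] <;> linarith)
  · intro x
    constructor
    · rw [hH]
      rintro ⟨h1, h2, h3, h4, h5⟩
      simp only [latticeEmbed₃] at h1 h2 h3 h4 h5
      norm_cast at h1 h2 h3 h4 h5
      have hx : x = ![x 0, x 1, x 2] := by ext i; fin_cases i <;> rfl
      rw [hS]
      generalize x 0 = a at *
      generalize x 1 = b at *
      generalize x 2 = c at *
      subst hx
      have a1 : -2 ≤ a := by omega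
      have a2 : a ≤ 1 := by omega
      have b1 : -1 ≤ b := by omega
      have b2 : b ≤ 1 := by omega
      have c1 : -1 ≤ c := by omega
      have c2 : c ≤ 1 := by omega
      interval_cases a <;> interval_cases b <;> interval_cases c <;>
        first
        | (exfalso; omega)
        | simp
    · rintro (h | rfl)
      · exact hSP x h
      · rw [hH]
        norm_num [prismH, latticeEmbed₃]
end
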